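/- arXiv:2208.14126 — 2 statements merged into one kernel-verified Lean document; each statement's English description precedes it below -/
import Mathlib

section
/- A graph story S = (G, ω, k, τ) is realizable if and only if there exists a sequence ⟨φ_ω, φ_{ω+1}, ..., φ_n⟩ of face-k-weighted planar embeddings of the graphs ⟨G_ω, G_{ω+1}, ..., G_n⟩ such that φ_{i−1} and φ_i are compatible for every i with ω+1 ≤ i ≤ n. -/
open Set

namespace GraphStories

/-- Points of the plane. -/
abbrev Pt : Type := ℝ × ℝ

/-- The vertex set of the window graph `G_i` (time `i` is 1-indexed, vertex
`v_j : Fin n` sits at position `j+1` in the ordering `τ`):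
`v_j ∈ G_i` iff `max{1, i-ω+1} ≤ j+1 ≤ i`. -/
def window (n ω i : ℕ) : Set (Fin n) := {j | j.val + 1 ≤ i ∧ i ≤ j.val + ω}

/-- All edges of `G` are visible: `|i - j| < ω` for every edge `(v_i, v_j)`. -/
def Visible (n ω : ℕ) (G : SimpleGraph (Fin n)) : Prop :=
  ∀ u v : Fin n, G.Adj u v → u.val < v.val + ω ∧ v.val < u.val + ω

/-- The data of a drawing: a position for every vertex, and a parametrized curve
for every (ordered) pair of vertices (only the data attached to the vertices and
edges of the relevant subgraph is meaningful). -/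
structure RawDrawing (n : ℕ) where
  pos : Fin n → Pt
  curve : Fin n → Fin n → ℝ → Pt

/-- `γ` (restricted to `[0,1]`) is a Jordan arc from `a` to `b`. -/
def IsArcFrom (γ : ℝ → Pt) (a b : Pt) : Prop :=
  ContinuousOn γ (Icc 0 1) ∧ InjOn γ (Icc 0 1) ∧ γ 0 = a ∧ γ 1 = b

/-- The set of points of an arc. -/
def arcBody (γ : ℝ → Pt) : Set Pt := γ '' Icc (0 : ℝ) 1

/-- The set of interior points of an arc (endpoints removed). -/
def arcInterior (γ : ℝ → Pt) : Set Pt := γ '' Ioo (0 : ℝ) 1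

/-- `D` is a planar drawing of the subgraph of `G` induced by `S`, with the
vertices mapped to (distinct) points of `P` and the edges drawn as Jordan arcs
which pairwise do not intersect except at common endpoints. -/
structure IsPlanarDrawingOn (n : ℕ) (G : SimpleGraph (Fin n)) (S : Set (Fin n))
    (P : Set Pt) (D : RawDrawing n) : Prop where
  pos_mem : ∀ v ∈ S, D.pos v ∈ P
  pos_inj : InjOn D.pos S
  curve_symm : ∀ u v : Fin n, D.curve v u = fun t => D.curve u v (1 - t)
  arc : ∀ u ∈ S, ∀ v ∈ S, G.Adj u v → IsArcFrom (D.curve u v) (D.pos u) (D.pos v)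
  vertex_off_arc : ∀ u ∈ S, ∀ v ∈ S, G.Adj u v → ∀ w ∈ S,
      D.pos w ∉ arcInterior (D.curve u v)
  no_cross : ∀ u ∈ S, ∀ v ∈ S, ∀ x ∈ S, ∀ y ∈ S, G.Adj u v → G.Adj x y →
      s(u, v) ≠ s(x, y) →
      arcInterior (D.curve u v) ∩ arcInterior (D.curve x y) = ∅

/-- `D` is a planar drawing of the subgraph of `G` induced by `S` (anywhere in
the plane). -/
def IsPlanarDrawing (n : ℕ) (G : SimpleGraph (Fin n)) (S : Set (Fin n))
    (D : RawDrawing n) : Prop :=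
  IsPlanarDrawingOn n G S univ D

/-- A realization of the graph story `(G, ω, k, τ)` on the point set `P`:
a sequence `Γ_1, …, Γ_n` of planar drawings of the window graphs `G_1, …, G_n`
on `P` (property R1) such that consecutive drawings restrict identically
(vertex positions and edge arcs) to the common subgraph `G_{i-1} ∩ G_i`
(property R2). -/
structure Realization (n ω : ℕ) (G : SimpleGraph (Fin n)) (P : Set Pt) where
  Γ : ℕ → RawDrawing n
  planar : ∀ i, 1 ≤ i → i ≤ n → IsPlanarDrawingOn n G (window n ω i) P (Γ i)
  pos_eq : ∀ i, 2 ≤ i → i ≤ n → ∀ v ∈ window n ω (i - 1) ∩ window n ω i,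
      (Γ i).pos v = (Γ (i - 1)).pos v
  curve_eq : ∀ i, 2 ≤ i → i ≤ n →
      ∀ u ∈ window n ω (i - 1) ∩ window n ω i,
      ∀ v ∈ window n ω (i - 1) ∩ window n ω i,
      G.Adj u v → (Γ i).curve u v = (Γ (i - 1)).curve u v

/-- The story `(G, ω, k, τ)` admits a realization on the point set `P`. -/
def RealizableOn (n ω : ℕ) (G : SimpleGraph (Fin n)) (P : Set Pt) : Prop :=
  Nonempty (Realization n ω G P)

/-- The story `(G, ω, k, τ)` is realizable: it admits a realization on some set
of `ω + k` points. -/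
def Realizable (n ω k : ℕ) (G : SimpleGraph (Fin n)) : Prop :=
  ∃ P : Finset Pt, P.card = ω + k ∧ RealizableOn n ω G ↑P


/-- The set of points of the plane used by the drawing `D` of the subgraph of
`G` induced by `S` (vertex points and edge arcs). -/
def drawingImage (n : ℕ) (G : SimpleGraph (Fin n)) (S : Set (Fin n))
    (D : RawDrawing n) : Set Pt :=
  (D.pos '' S) ∪
    ⋃ (u : Fin n) (v : Fin n) (_ : u ∈ S) (_ : v ∈ S) (_ : G.Adj u v),
      arcBody (D.curve u v)

/-- The two drawings `D, D'` of the subgraph of `G` induced by `S`, carrying the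
respective sets `Q, Q'` of marked points, determine the same (face-weighted)
planar embedding: some self-homeomorphism of the plane maps the first drawing
onto the second, vertex-by-vertex and arc-by-arc, and maps the first set of
marked points onto the second (so corresponding faces carry equally many
marked points).  Weights of faces are represented by marked points lying
inside them. -/
def SameMarkedEmbedding (n : ℕ) (G : SimpleGraph (Fin n)) (S : Set (Fin n))
    (D D' : RawDrawing n) (Q Q' : Set Pt) : Prop :=
  ∃ φ : Homeomorph Pt Pt,
    (∀ v ∈ S, φ (D.pos v) = D'.pos v) ∧
    (∀ u ∈ S, ∀ v ∈ S, G.Adj u v →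
        φ '' arcBody (D.curve u v) = arcBody (D'.curve u v)) ∧
    φ '' Q = Q'

/-- A face-`k`-weighted planar embedding of the subgraph of `G` induced by `S`,
represented by a planar drawing together with `k` marked points placed off the
drawing (the weight of a face is the number of marked points it contains). -/
structure WeightedDrawing (n k : ℕ) (G : SimpleGraph (Fin n)) (S : Set (Fin n)) where
  D : RawDrawing n
  planar : IsPlanarDrawing n G S D
  marks : Finset Pt
  marks_card : marks.card = k
  marks_off : ∀ p ∈ marks, p ∉ drawingImage n G S D

/-- Compatibility of two consecutive face-`k`-weighted planar embeddings
`W` of `G_{i-1}` and `W'` of `G_i`: removing the vertex `v_{i-ω}` from `W`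
(replacing it by one extra marked point, accounting for the weight increase of
the merged face) yields the same face-`(k+1)`-weighted planar embedding of
`G_{i-1} ∩ G_i` as removing `v_i` from `W'`. -/
def CompatiblePair (n ω k : ℕ) (G : SimpleGraph (Fin n)) (i : ℕ)
    (W : WeightedDrawing n k G (window n ω (i - 1)))
    (W' : WeightedDrawing n k G (window n ω i)) : Prop :=
  ∃ a b : Fin n, a.val + 1 + ω = i ∧ b.val + 1 = i ∧
    SameMarkedEmbedding n G (window n ω (i - 1) ∩ window n ω i) W.D W'.D
      (↑W.marks ∪ {W.D.pos a}) (↑W'.marks ∪ {W'.D.pos b})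

/-!
The drawings of a realization agree whenever their windows overlap, and a vertex or edge once gone
never returns, so a realization is a single drawing `D` of `G` on `P` whose restriction to every
window is planar.

Given `D`, the window graph `G_i` occupies `ω` points of `P`, and the `k` free points serve as the
weights of a face-weighted embedding of `G_i`; for consecutive `i` the restriction to the common
subgraph is the same. An edge may however run through a free point, which then lies in no face. Such
edges are first rerouted: an arc has empty interior in the plane, so an arbitrarily small
homeomorphism pushes it off a given point, and moving each arc only near the points in its relative
interior creates no crossings.

Conversely, compatibility of `φ_{i-1}` and `φ_i` provides a homeomorphism of the plane which matches
the common subgraphs together with all `ω + k` points in use. Pulling `v_i` and its edges back along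
it extends, one vertex at a time, a drawing of the story up to time `i - 1` on the points of `φ_ω`
to time `i`; the pulled-back edges meet nothing that is visible at the same time.
-/

section Topology

open scoped Topology

theorem image_subset_union_of_fixes_compl {X : Type*} [TopologicalSpace X] {h : X ≃ₜ X}
    {U : Set X} (hU : ∀ x ∉ U, h x = x) (A : Set X) : h '' A ⊆ A ∪ U := by
  rintro _ ⟨x, hx, rfl⟩
  by_cases hxU : h x ∈ U
  · exact .inr hxU
  · rw [h.injective (hU _ hxU)]
    exact .inl hx

theorem exists_nhds_pairwiseDisjoint {X ι : Type*} [TopologicalSpace X] [T2Space X] [Finite ι]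
    {P : Set X} (hP : P.Finite) (K : ι → Set X) :
    ∃ N : X → Set X, (∀ p, N p ∈ 𝓝 p) ∧ P.PairwiseDisjoint N ∧
      ∀ p j, IsClosed (K j) → p ∉ K j → Disjoint (N p) (K j) := by
  obtain ⟨U, hU, hdisj⟩ := hP.t2_separation
  refine ⟨fun p ↦ U p ∩ ⋂ j, {x | IsClosed (K j) → p ∉ K j → x ∉ K j}, fun p ↦ ?_,
    hdisj.mono fun p ↦ inter_subset_left, fun p j hj hp ↦ ?_⟩
  · refine Filter.inter_mem ((hU p).2.mem_nhds (hU p).1) (Filter.iInter_mem.2 fun j ↦ ?_)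
    by_cases hj : IsClosed (K j) ∧ p ∉ K j
    · exact Filter.mem_of_superset (hj.1.isOpen_compl.mem_nhds hj.2) fun x hx _ _ ↦ hx
    · exact Filter.mem_of_superset Filter.univ_mem fun x _ h₁ h₂ ↦ (hj ⟨h₁, h₂⟩).elim
  · exact disjoint_left.2 fun x hx ↦ mem_iInter.1 hx.2 j hj hp

theorem ordConnected_inter_preimage_of_injOn {X : Type*} [TopologicalSpace X] [T2Space X]
    {K : Set ℝ} (hK : IsCompact K) {γ : ℝ → X} (hγ : ContinuousOn γ K) (hinj : InjOn γ K)
    {B : Set X} (hBK : B ⊆ γ '' K) (hB : IsPreconnected B) : OrdConnected (K ∩ γ ⁻¹' B) := by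
  have : CompactSpace K := isCompact_iff_compactSpace.1 hK
  have hpre : IsPreconnected (K.domRestrict γ ⁻¹' B) :=
    hB.preimage_of_isClosedMap (injOn_iff_injective.1 hinj) hγ.domRestrict.isClosedMap
      (by rwa [range_domRestrict])
  rw [domRestrict_eq, preimage_comp] at hpre
  simpa only [Subtype.image_preimage_coe] using
    (hpre.image _ continuous_subtype_val.continuousOn).ordConnected

variable {E : Type*} [NormedAddCommGroup E] [NormedSpace ℝ E]

theorem isPreconnected_ball_sdiff_singleton (hE : 1 < Module.rank ℝ E) {c x : E} {r : ℝ}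
    (hx : x ∈ Metric.ball c r) : IsPreconnected (Metric.ball c r \ {x}) := by
  set e := OpenPartialHomeomorph.univBall (P := E) c r
  have hr : 0 < r := Metric.pos_of_mem_ball hx
  have hsource : e.source = univ := OpenPartialHomeomorph.univBall_source c r
  have htarget : e.target = Metric.ball c r := OpenPartialHomeomorph.univBall_target c hr
  have hinj : Function.Injective e := injOn_univ.1 (hsource ▸ e.injOn)
  have himage : e '' {e.symm x}ᶜ = Metric.ball c r \ {x} := by
    rw [image_compl_eq_range_sdiff_image hinj, image_singleton, ← image_univ, ← hsource,
      e.image_source_eq_target, htarget, e.right_inv (htarget ▸ hx)]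
  rw [← himage]
  exact (isConnected_compl_singleton_of_one_lt_rank hE _).isPreconnected.image _
    (e.continuousOn.mono (hsource ▸ subset_univ _))

theorem interior_image_eq_empty_of_injOn (hE : 1 < Module.rank ℝ E) {K : Set ℝ}
    (hK : IsCompact K) {γ : ℝ → E} (hγ : ContinuousOn γ K) (hinj : InjOn γ K) :
    interior (γ '' K) = ∅ := by
  by_contra hne
  obtain ⟨c, hc⟩ := nonempty_iff_ne_empty.2 hne
  obtain ⟨r, hr, hball⟩ := Metric.isOpen_iff.1 isOpen_interior c hc
  replace hball : Metric.ball c r ⊆ γ '' K := hball.trans interior_subset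
  obtain ⟨s, t, hs, ht, hst⟩ : ∃ s t, s ∈ K ∩ γ ⁻¹' Metric.ball c r ∧
      t ∈ K ∩ γ ⁻¹' Metric.ball c r ∧ s < t := by
    have : Nontrivial E := rank_pos_iff_nontrivial.1 (zero_lt_one.trans hE)
    have : (𝓝[≠] c).NeBot := Module.punctured_nhds_neBot ℝ E c
    obtain ⟨x, hx, y, hy, hxy⟩ := (infinite_of_mem_nhds c (Metric.ball_mem_nhds c hr)).nontrivial
    obtain ⟨s, hsK, rfl⟩ := hball hx
    obtain ⟨t, htK, rfl⟩ := hball hy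
    obtain hst | hst := (ne_of_apply_ne γ hxy).lt_or_gt
    · exact ⟨s, t, ⟨hsK, hx⟩, ⟨htK, hy⟩, hst⟩
    · exact ⟨t, s, ⟨htK, hy⟩, ⟨hsK, hx⟩, hst⟩
  obtain ⟨m, hsm, hmt⟩ := exists_between hst
  have hm : m ∈ K ∩ γ ⁻¹' Metric.ball c r :=
    (ordConnected_inter_preimage_of_injOn hK hγ hinj hball
      (convex_ball c r).isPreconnected).out hs ht ⟨hsm.le, hmt.le⟩
  have hpunctured : OrdConnected (K ∩ γ ⁻¹' (Metric.ball c r \ {γ m})) :=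
    ordConnected_inter_preimage_of_injOn hK hγ hinj (sdiff_subset.trans hball)
      (isPreconnected_ball_sdiff_singleton hE hm.2)
  exact (hpunctured.out ⟨hs.1, hs.2, hinj.ne hs.1 hm.1 hsm.ne⟩
    ⟨ht.1, ht.2, hinj.ne ht.1 hm.1 hmt.ne'⟩ ⟨hsm.le, hmt.le⟩).2.2 rfl

/-- The tent function of height `1` supported on the ball of radius `r` around `p`; it cuts off
the translation by which `exists_homeomorph_apply_eq` moves `p`. -/
noncomputable def tent {X : Type*} [PseudoMetricSpace X] (p : X) (r : ℝ) (x : X) : ℝ :=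
  max (1 - r⁻¹ * dist x p) 0

theorem abs_tent_sub_tent_le {X : Type*} [PseudoMetricSpace X] (p : X) {r : ℝ} (hr : 0 ≤ r)
    (x y : X) : |tent p r x - tent p r y| ≤ r⁻¹ * dist x y := calc
  |tent p r x - tent p r y| ≤ |(1 - r⁻¹ * dist x p) - (1 - r⁻¹ * dist y p)| :=
    abs_max_sub_max_le_abs _ _ _
  _ = r⁻¹ * |dist y p - dist x p| := by
    rw [sub_sub_sub_cancel_left, ← mul_sub, abs_mul, abs_of_nonneg (inv_nonneg.2 hr)]
  _ ≤ r⁻¹ * dist x y := by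
    rw [dist_comm x y]
    gcongr
    exact abs_dist_sub_le y x p

theorem lipschitzWith_tent_smul (p v : E) {r : ℝ} (hr : 0 ≤ r) :
    LipschitzWith (Real.toNNReal (r⁻¹ * ‖v‖)) fun x ↦ tent p r x • v := by
  refine .of_dist_le' fun x y ↦ ?_
  rw [dist_eq_norm, ← sub_smul, norm_smul, Real.norm_eq_abs, mul_right_comm]
  gcongr
  exact abs_tent_sub_tent_le p hr x y

theorem exists_homeomorph_apply_eq [CompleteSpace E] {p q : E} {r : ℝ} (hpq : dist p q < r) :
    ∃ h : E ≃ₜ E, h p = q ∧ ∀ x ∉ Metric.ball p r, h x = x := by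
  have hr : 0 < r := dist_nonneg.trans_lt hpq
  -- A perturbation of the identity with Lipschitz constant less than `1` is invertible.
  have happrox : ApproximatesLinearOn (fun x ↦ x + tent p r x • (q - p))
      (ContinuousLinearEquiv.refl ℝ E : E →L[ℝ] E) univ (Real.toNNReal (r⁻¹ * ‖q - p‖)) := by
    refine LipschitzOnWith.approximatesLinearOn (lipschitzOnWith_univ.2 ?_)
    convert lipschitzWith_tent_smul p (q - p) hr.le using 2
    simp
  have hsmall : Subsingleton E ∨ Real.toNNReal (r⁻¹ * ‖q - p‖) <
      ‖((ContinuousLinearEquiv.refl ℝ E).symm : E →L[ℝ] E)‖₊⁻¹ := by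
    refine (subsingleton_or_nontrivial E).imp_right fun (_ : Nontrivial E) ↦ ?_
    have hnorm : ‖((ContinuousLinearEquiv.refl ℝ E).symm : E →L[ℝ] E)‖₊ = 1 := by
      rw [ContinuousLinearEquiv.refl_symm]
      exact ContinuousLinearMap.nnnorm_id
    rwa [hnorm, inv_one, Real.toNNReal_lt_one, inv_mul_lt_one₀ hr, ← dist_eq_norm, dist_comm]
  refine ⟨happrox.toHomeomorph _ hsmall, ?_, fun x hx ↦ ?_⟩
  · change p + tent p r p • (q - p) = q
    simp [tent]
  · have htent : tent p r x = 0 :=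
      max_eq_right (sub_nonpos.2 ((one_le_inv_mul₀ hr).2 (not_lt.1 hx)))
    change x + tent p r x • (q - p) = x
    rw [htent, zero_smul, add_zero]

theorem exists_homeomorph_notMem_image [CompleteSpace E] {K V : Set E} {q : E}
    (hK : interior K = ∅) (hV : V ∈ 𝓝 q) :
    ∃ h : E ≃ₜ E, q ∉ h '' K ∧ ∀ x ∉ V, h x = x := by
  obtain ⟨r, hr, hrV⟩ := Metric.mem_nhds_iff.1 hV
  obtain ⟨p, hpK, hpq⟩ :=
    (interior_eq_empty_iff_dense_compl.1 hK).exists_dist_lt q (half_pos hr)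
  rw [dist_comm] at hpq
  obtain ⟨h, hp, hfix⟩ := exists_homeomorph_apply_eq hpq
  refine ⟨h, ?_, fun x hx ↦ hfix x fun hxp ↦ hx (hrV ?_)⟩
  · rwa [← hp, h.injective.mem_set_image]
  · exact Metric.ball_subset_ball' (by linarith) hxp

theorem exists_homeomorph_disjoint_image [CompleteSpace E] {K Q : Set E} {N : E → Set E}
    (hK : interior K = ∅) (hQ : Q.Finite) (hN : ∀ q ∈ Q, N q ∈ 𝓝 q)
    (hdisj : Q.PairwiseDisjoint N) :
    ∃ h : E ≃ₜ E, Disjoint Q (h '' K) ∧ ∀ x ∉ ⋃ q ∈ Q, N q, h x = x := by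
  induction Q, hQ using Set.Finite.induction_on with
  | empty => exact ⟨.refl E, empty_disjoint _, fun _ _ ↦ rfl⟩
  | @insert q Q hqQ _ ih =>
    obtain ⟨h, hQK, hfix⟩ :=
      ih (fun p hp ↦ hN p (.inr hp)) (hdisj.subset (subset_insert q Q))
    obtain ⟨g, hq, hgfix⟩ := exists_homeomorph_notMem_image
      (h.image_interior K ▸ hK ▸ image_empty h : interior (h '' K) = ∅) (hN q (.inl rfl))
    have hgQ : ∀ p ∈ Q, g p = p := fun p hp ↦ hgfix p fun hpq ↦
      disjoint_left.1 (hdisj (.inl rfl) (.inr hp) (ne_of_mem_of_not_mem hp hqQ).symm) hpq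
        (mem_of_mem_nhds (hN p (.inr hp)))
    refine ⟨h.trans g, ?_, fun x hx ↦ ?_⟩
    · have himage : (h.trans g) '' K = g '' (h '' K) := (image_image g h K).symm
      rw [himage, disjoint_insert_left]
      refine ⟨hq, disjoint_left.2 fun p hp hpK ↦ disjoint_left.1 hQK hp ?_⟩
      rwa [← hgQ p hp, g.injective.mem_set_image] at hpK
    · rw [biUnion_insert, mem_union, not_or] at hx
      rw [Homeomorph.trans_apply, hfix x hx.2, hgfix x hx.1]

/-- For an arc interior `I`, the region in which a detour of the arc around the points of `P` may
run: `I` together with the neighborhood `N q` of every `q ∈ P` to be avoided. -/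
def detourRegion {X : Type*} (P : Set X) (N : X → Set X) (I : Set X) : Set X :=
  I ∪ ⋃ q ∈ P ∩ I, N q

theorem disjoint_detourRegion {X : Type*} {P I J : Set X} {N : X → Set X}
    (hN : P.PairwiseDisjoint N) (hIJ : Disjoint I J) (hI : ∀ q ∈ P ∩ I, Disjoint (N q) J)
    (hJ : ∀ q ∈ P ∩ J, Disjoint (N q) I) :
    Disjoint (detourRegion P N I) (detourRegion P N J) := by
  simp only [detourRegion, disjoint_union_left, disjoint_union_right, disjoint_iUnion₂_left,
    disjoint_iUnion₂_right]
  exact ⟨⟨hIJ, hI⟩, fun q hq ↦ ⟨(hJ q hq).symm, fun p hp ↦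
    hN hp.1 hq.1 (hIJ.ne_of_mem hp.2 hq.2)⟩⟩

/-- The homeomorphism `h` diverts an arc with interior `I` from all points of `P`: it fixes those
outside `I` and moves `I` within `detourRegion P N I`, away from `P`. -/
structure IsDetour {X : Type*} [TopologicalSpace X] (P : Set X) (N : X → Set X) (I : Set X)
    (h : X ≃ₜ X) : Prop where
  apply_eq : ∀ p ∈ P, p ∉ I → h p = p
  disjoint_image : Disjoint P (h '' I)
  image_subset : h '' I ⊆ detourRegion P N I

theorem exists_isDetour [CompleteSpace E] {P I : Set E} {N : E → Set E} (hP : P.Finite)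
    (hN : ∀ p, N p ∈ 𝓝 p) (hdisj : P.PairwiseDisjoint N) (hI : interior I = ∅) :
    ∃ h : E ≃ₜ E, IsDetour P N I h := by
  obtain ⟨h, havoid, hfix⟩ := exists_homeomorph_disjoint_image hI
    (hP.subset inter_subset_left) (fun q _ ↦ hN q) (hdisj.subset (inter_subset_left (t := I)))
  have apply_eq : ∀ p ∈ P, p ∉ I → h p = p := by
    refine fun p hp hpI ↦ hfix p fun hpN ↦ ?_
    obtain ⟨q, hq, hpq⟩ := mem_iUnion₂.1 hpN
    exact disjoint_left.1 (hdisj hp hq.1 (ne_of_mem_of_not_mem hq.2 hpI).symm)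
      (mem_of_mem_nhds (hN p)) hpq
  refine ⟨h, apply_eq, disjoint_left.2 fun p hp hpI ↦ ?_,
    image_subset_union_of_fixes_compl hfix I⟩
  by_cases hp' : p ∈ I
  · exact disjoint_left.1 havoid ⟨hp, hp'⟩ hpI
  · rw [← apply_eq p hp hp', h.injective.mem_set_image] at hpI
    exact hp' hpI

end Topology

section Arc

variable {γ : ℝ → Pt} {a b : Pt}

theorem arcBody_comp (f : Pt → Pt) (γ : ℝ → Pt) : arcBody (f ∘ γ) = f '' arcBody γ :=
  image_comp f γ _

theorem arcInterior_comp (f : Pt → Pt) (γ : ℝ → Pt) :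
    arcInterior (f ∘ γ) = f '' arcInterior γ :=
  image_comp f γ _

theorem arcInterior_subset_arcBody (γ : ℝ → Pt) : arcInterior γ ⊆ arcBody γ :=
  image_mono Ioo_subset_Icc_self

theorem arcInterior_reverse (γ : ℝ → Pt) : arcInterior (fun t ↦ γ (1 - t)) = arcInterior γ := by
  have himage : (fun t ↦ 1 - t) '' Ioo (0 : ℝ) 1 = Ioo 0 1 := by
    rw [image_const_sub_Ioo, sub_self, sub_zero]
  rw [arcInterior, arcInterior, ← himage, image_image]
  simp only [sub_sub_cancel, himage]

theorem IsArcFrom.map (h : IsArcFrom γ a b) (f : Pt ≃ₜ Pt) : IsArcFrom (f ∘ γ) (f a) (f b) :=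
  ⟨f.continuous.comp_continuousOn h.1, f.injective.comp_injOn h.2.1, congrArg f h.2.2.1,
    congrArg f h.2.2.2⟩

theorem IsArcFrom.isClosed_arcBody (h : IsArcFrom γ a b) : IsClosed (arcBody γ) :=
  (isCompact_Icc.image_of_continuousOn h.1).isClosed

theorem IsArcFrom.arcInterior_eq_sdiff (h : IsArcFrom γ a b) :
    arcInterior γ = arcBody γ \ {a, b} := by
  obtain ⟨-, hinj, rfl, rfl⟩ := h
  rw [arcInterior, ← Icc_sdiff_both, hinj.image_sdiff_subset, image_pair, arcBody]
  simp [pair_subset_iff]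

theorem IsArcFrom.left_notMem_arcInterior (h : IsArcFrom γ a b) : a ∉ arcInterior γ := by
  simp [h.arcInterior_eq_sdiff]

theorem IsArcFrom.right_notMem_arcInterior (h : IsArcFrom γ a b) : b ∉ arcInterior γ := by
  simp [h.arcInterior_eq_sdiff]

theorem IsArcFrom.interior_arcInterior_eq_empty (h : IsArcFrom γ a b) :
    interior (arcInterior γ) = ∅ := by
  refine subset_empty_iff.1 ((interior_mono (arcInterior_subset_arcBody γ)).trans_eq ?_)
  exact interior_image_eq_empty_of_injOn (Module.one_lt_rank_of_one_lt_finrank (by simp))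
    isCompact_Icc h.1 h.2.1

end Arc

section Drawing

variable {n : ℕ} {G : SimpleGraph (Fin n)} {S T : Set (Fin n)} {P Q Q' Q'' : Set Pt}
  {D D' D'' : RawDrawing n}

theorem IsPlanarDrawingOn.mono (hD : IsPlanarDrawingOn n G T P D) (hST : S ⊆ T) :
    IsPlanarDrawingOn n G S P D where
  pos_mem v hv := hD.pos_mem v (hST hv)
  pos_inj := hD.pos_inj.mono hST
  curve_symm := hD.curve_symm
  arc u hu v hv := hD.arc u (hST hu) v (hST hv)
  vertex_off_arc u hu v hv huv w hw := hD.vertex_off_arc u (hST hu) v (hST hv) huv w (hST hw)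
  no_cross u hu v hv x hx y hy :=
    hD.no_cross u (hST hu) v (hST hv) x (hST hx) y (hST hy)

theorem IsPlanarDrawingOn.of_image_pos_subset (hD : IsPlanarDrawingOn n G S P D)
    (hQ : D.pos '' S ⊆ Q) : IsPlanarDrawingOn n G S Q D :=
  { hD with pos_mem := fun _ hv ↦ hQ (mem_image_of_mem _ hv) }

theorem IsPlanarDrawingOn.notMem_arcBody (hD : IsPlanarDrawingOn n G S P D) {u v x y : Fin n}
    (hu : u ∈ S) (hv : v ∈ S) (hx : x ∈ S) (hy : y ∈ S) (huv : G.Adj u v) (hxy : G.Adj x y)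
    (hne : s(u, v) ≠ s(x, y)) {p : Pt} (hp : p ∈ arcInterior (D.curve u v)) :
    p ∉ arcBody (D.curve x y) := by
  intro hpxy
  have hp' : p ∉ arcInterior (D.curve x y) := fun h ↦
    (eq_empty_iff_forall_notMem.1 (hD.no_cross u hu v hv x hx y hy huv hxy hne)) p ⟨hp, h⟩
  rw [(hD.arc x hx y hy hxy).arcInterior_eq_sdiff, mem_sdiff, not_and_not_right] at hp'
  obtain rfl | rfl := hp' hpxy
  · exact hD.vertex_off_arc u hu v hv huv x hx hp
  · exact hD.vertex_off_arc u hu v hv huv y hy hp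

namespace SameMarkedEmbedding

theorem mono (h : SameMarkedEmbedding n G T D D' Q Q') (hST : S ⊆ T) :
    SameMarkedEmbedding n G S D D' Q Q' := by
  obtain ⟨φ, hpos, hbody, hmarks⟩ := h
  exact ⟨φ, fun v hv ↦ hpos v (hST hv), fun u hu v hv ↦ hbody u (hST hu) v (hST hv), hmarks⟩

protected theorem refl (D : RawDrawing n) (Q : Set Pt) : SameMarkedEmbedding n G S D D Q Q :=
  ⟨.refl Pt, fun _ _ ↦ rfl, fun _ _ _ _ _ ↦ image_id _, image_id _⟩

theorem trans (h : SameMarkedEmbedding n G S D D' Q Q')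
    (h' : SameMarkedEmbedding n G S D' D'' Q' Q'') : SameMarkedEmbedding n G S D D'' Q Q'' := by
  obtain ⟨φ, hpos, hbody, hmarks⟩ := h
  obtain ⟨ψ, hpos', hbody', hmarks'⟩ := h'
  have himage (A : Set Pt) : φ.trans ψ '' A = ψ '' (φ '' A) := image_comp ψ φ A
  refine ⟨φ.trans ψ, fun v hv ↦ ?_, fun u hu v hv huv ↦ ?_, ?_⟩
  · rw [Homeomorph.trans_apply, hpos v hv, hpos' v hv]
  · rw [himage, hbody u hu v hv huv, hbody' u hu v hv huv]
  · rw [himage, hmarks, hmarks']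

theorem union_pos (h : SameMarkedEmbedding n G S D D' Q Q') :
    SameMarkedEmbedding n G S D D' (Q ∪ D.pos '' S) (Q' ∪ D'.pos '' S) := by
  obtain ⟨φ, hpos, hbody, hmarks⟩ := h
  refine ⟨φ, hpos, hbody, ?_⟩
  rw [image_union, hmarks, image_image, image_congr hpos]

theorem isPlanarDrawingOn (h : SameMarkedEmbedding n G S D D' Q Q')
    (hD' : IsPlanarDrawingOn n G S Q' D')
    (hsymm : ∀ u v, D.curve v u = fun t ↦ D.curve u v (1 - t))
    (harc : ∀ u ∈ S, ∀ v ∈ S, G.Adj u v → IsArcFrom (D.curve u v) (D.pos u) (D.pos v)) :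
    IsPlanarDrawingOn n G S Q D := by
  obtain ⟨φ, hpos, hbody, hmarks⟩ := h
  have hint : ∀ u ∈ S, ∀ v ∈ S, G.Adj u v →
      φ '' arcInterior (D.curve u v) = arcInterior (D'.curve u v) := by
    intro u hu v hv huv
    rw [(harc u hu v hv huv).arcInterior_eq_sdiff, (hD'.arc u hu v hv huv).arcInterior_eq_sdiff,
      image_sdiff φ.injective, hbody u hu v hv huv, image_pair, hpos u hu, hpos v hv]
  constructor
  case pos_mem =>
    intro v hv
    rw [← φ.injective.mem_set_image, hmarks, hpos v hv]
    exact hD'.pos_mem v hv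
  case pos_inj =>
    intro u hu v hv huv
    refine hD'.pos_inj hu hv ?_
    rw [← hpos u hu, ← hpos v hv, huv]
  case curve_symm => exact hsymm
  case arc => exact harc
  case vertex_off_arc =>
    intro u hu v hv huv w hw
    rw [← φ.injective.mem_set_image, hint u hu v hv huv, hpos w hw]
    exact hD'.vertex_off_arc u hu v hv huv w hw
  case no_cross =>
    intro u hu v hv x hx y hy huv hxy hne
    rw [← image_eq_empty (f := φ), image_inter φ.injective, hint u hu v hv huv,
      hint x hx y hy hxy]
    exact hD'.no_cross u hu v hv x hx y hy huv hxy hne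

end SameMarkedEmbedding

/-- The drawings `D` and `D'` restrict identically to the subgraph of `G` induced by `S`: the
relation that (R2) imposes on consecutive drawings. -/
structure AgreeOn (G : SimpleGraph (Fin n)) (S : Set (Fin n)) (D D' : RawDrawing n) : Prop where
  pos_eq : ∀ v ∈ S, D.pos v = D'.pos v
  curve_eq : ∀ u ∈ S, ∀ v ∈ S, G.Adj u v → D.curve u v = D'.curve u v

namespace AgreeOn

protected theorem refl (D : RawDrawing n) : AgreeOn G S D D :=
  ⟨fun _ _ ↦ rfl, fun _ _ _ _ _ ↦ rfl⟩

theorem mono (h : AgreeOn G T D D') (hST : S ⊆ T) : AgreeOn G S D D' :=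
  ⟨fun v hv ↦ h.pos_eq v (hST hv), fun u hu v hv ↦ h.curve_eq u (hST hu) v (hST hv)⟩

theorem symm (h : AgreeOn G S D D') : AgreeOn G S D' D :=
  ⟨fun v hv ↦ (h.pos_eq v hv).symm, fun u hu v hv huv ↦ (h.curve_eq u hu v hv huv).symm⟩

theorem trans (h : AgreeOn G S D D') (h' : AgreeOn G S D' D'') : AgreeOn G S D D'' :=
  ⟨fun v hv ↦ (h.pos_eq v hv).trans (h'.pos_eq v hv),
    fun u hu v hv huv ↦ (h.curve_eq u hu v hv huv).trans (h'.curve_eq u hu v hv huv)⟩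

theorem sameMarkedEmbedding (h : AgreeOn G S D D') (Q : Set Pt) :
    SameMarkedEmbedding n G S D D' Q Q :=
  ⟨.refl Pt, h.pos_eq, fun u hu v hv huv ↦ by
    rw [h.curve_eq u hu v hv huv]; exact image_id _, image_id _⟩

theorem isPlanarDrawingOn (h : AgreeOn G S D D') (hD' : IsPlanarDrawingOn n G S P D')
    (hsymm : ∀ u v, D.curve v u = fun t ↦ D.curve u v (1 - t)) :
    IsPlanarDrawingOn n G S P D := by
  refine (h.sameMarkedEmbedding P).isPlanarDrawingOn hD' hsymm fun u hu v hv huv ↦ ?_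
  rw [h.curve_eq u hu v hv huv, h.pos_eq u hu, h.pos_eq v hv]
  exact hD'.arc u hu v hv huv

end AgreeOn

/-- The drawing `D` with the vertex `b` and its incident edges replaced by the images under `f` of
those of `E`. -/
def RawDrawing.replaceVertex (D E : RawDrawing n) (f : Pt → Pt) (b : Fin n) : RawDrawing n where
  pos v := if v = b then f (E.pos v) else D.pos v
  curve u v := if u = b ∨ v = b then f ∘ E.curve u v else D.curve u v

theorem RawDrawing.agreeOn_replaceVertex (D E : RawDrawing n) (f : Pt → Pt) {b : Fin n}
    (hb : b ∉ S) : AgreeOn G S (D.replaceVertex E f b) D where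
  pos_eq _ hv := if_neg (ne_of_mem_of_not_mem hv hb)
  curve_eq _ hu _ hv _ :=
    if_neg (not_or.2 ⟨ne_of_mem_of_not_mem hu hb, ne_of_mem_of_not_mem hv hb⟩)

theorem RawDrawing.curve_symm_replaceVertex {D E : RawDrawing n}
    (hD : ∀ u v, D.curve v u = fun t ↦ D.curve u v (1 - t))
    (hE : ∀ u v, E.curve v u = fun t ↦ E.curve u v (1 - t)) (f : Pt → Pt) (b u v : Fin n) :
    (D.replaceVertex E f b).curve v u = fun t ↦ (D.replaceVertex E f b).curve u v (1 - t) := by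
  by_cases h : u = b ∨ v = b
  · simp only [replaceVertex, if_pos h, if_pos h.symm, hE u v, Function.comp_def]
  · simp only [replaceVertex, if_neg h, if_neg (mt Or.symm h), hD u v]

theorem SameMarkedEmbedding.exists_extension {b : Fin n} (hb : b ∉ S)
    (h : SameMarkedEmbedding n G S D D' Q Q') (hD : IsPlanarDrawingOn n G S Q D)
    (hD' : IsPlanarDrawingOn n G (insert b S) Q' D') :
    ∃ E : RawDrawing n, IsPlanarDrawingOn n G (insert b S) Q E ∧
      SameMarkedEmbedding n G (insert b S) E D' Q Q' ∧ ∀ T, b ∉ T → AgreeOn G T E D := by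
  obtain ⟨φ, hpos, hbody, hmarks⟩ := h
  set E := D.replaceVertex D' φ.symm b
  have pos_eq : ∀ v ∈ insert b S, E.pos v = φ.symm (D'.pos v) := by
    intro v hv
    by_cases hvb : v = b
    · exact if_pos hvb
    · rw [← hpos v (hv.resolve_left hvb), φ.symm_apply_apply]
      exact if_neg hvb
  have curve_eq : ∀ u v, u = b ∨ v = b → E.curve u v = φ.symm ∘ D'.curve u v :=
    fun u v huv ↦ if_pos huv
  have curve_eq' : ∀ u v, ¬(u = b ∨ v = b) → E.curve u v = D.curve u v :=
    fun u v huv ↦ if_neg huv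
  have hsame : SameMarkedEmbedding n G (insert b S) E D' Q Q' := by
    refine ⟨φ, fun v hv ↦ by rw [pos_eq v hv, φ.apply_symm_apply], fun u hu v hv huv ↦ ?_, hmarks⟩
    by_cases hub : u = b ∨ v = b
    · rw [curve_eq u v hub, arcBody_comp, image_image]
      simp only [φ.apply_symm_apply, image_id']
    · obtain ⟨hub', hvb'⟩ := not_or.1 hub
      rw [curve_eq' u v hub, hbody u (hu.resolve_left hub') v (hv.resolve_left hvb') huv]
  refine ⟨E, hsame.isPlanarDrawingOn hD'
    (D.curve_symm_replaceVertex hD.curve_symm hD'.curve_symm _ b) fun u hu v hv huv ↦ ?_, hsame,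
    fun T hT ↦ D.agreeOn_replaceVertex D' φ.symm hT⟩
  by_cases hub : u = b ∨ v = b
  · rw [curve_eq u v hub, pos_eq u hu, pos_eq v hv]
    exact (hD'.arc u hu v hv huv).map φ.symm
  · obtain ⟨hub', hvb'⟩ := not_or.1 hub
    have hagree : AgreeOn G S E D := D.agreeOn_replaceVertex D' φ.symm hb
    have hu' := hu.resolve_left hub'
    have hv' := hv.resolve_left hvb'
    rw [hagree.curve_eq u hu' v hv' huv, hagree.pos_eq u hu', hagree.pos_eq v hv']
    exact hD.arc u hu' v hv' huv

/-- The drawing `D` with every arc, of interior `I` say, replaced by its image under `h I`.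
Indexing `h` by the interior keeps the arcs of `(u, v)` and `(v, u)` reverse to each other. -/
def RawDrawing.detour (D : RawDrawing n) (h : Set Pt → Pt ≃ₜ Pt) : RawDrawing n where
  pos := D.pos
  curve u v := h (arcInterior (D.curve u v)) ∘ D.curve u v

theorem IsPlanarDrawingOn.detour {N : Pt → Set Pt} {h : Set Pt → Pt ≃ₜ Pt}
    (hD : IsPlanarDrawingOn n G S P D) (hN : P.PairwiseDisjoint N)
    (hNarc : ∀ p, ∀ u ∈ S, ∀ v ∈ S, G.Adj u v → p ∉ arcBody (D.curve u v) →
      Disjoint (N p) (arcBody (D.curve u v)))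
    (hh : ∀ u ∈ S, ∀ v ∈ S, G.Adj u v →
      IsDetour P N (arcInterior (D.curve u v)) (h (arcInterior (D.curve u v)))) :
    IsPlanarDrawingOn n G S P (D.detour h) where
  pos_mem := hD.pos_mem
  pos_inj := hD.pos_inj
  curve_symm u v := by
    simp only [RawDrawing.detour, hD.curve_symm u v, arcInterior_reverse, Function.comp_def]
  arc u hu v hv huv := by
    have harc := hD.arc u hu v hv huv
    have hfix := (hh u hu v hv huv).apply_eq
    have harc' := harc.map (h (arcInterior (D.curve u v)))
    rw [hfix _ (hD.pos_mem u hu) harc.left_notMem_arcInterior,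
      hfix _ (hD.pos_mem v hv) harc.right_notMem_arcInterior] at harc'
    exact harc'
  vertex_off_arc u hu v hv huv w hw := by
    rw [RawDrawing.detour, arcInterior_comp]
    exact disjoint_left.1 (hh u hu v hv huv).disjoint_image (hD.pos_mem w hw)
  no_cross u hu v hv x hx y hy huv hxy hne := by
    have hN_disjoint {u v x y : Fin n} (hu : u ∈ S) (hv : v ∈ S) (hx : x ∈ S) (hy : y ∈ S)
        (huv : G.Adj u v) (hxy : G.Adj x y) (hne : s(u, v) ≠ s(x, y)) :
        ∀ q ∈ P ∩ arcInterior (D.curve u v), Disjoint (N q) (arcInterior (D.curve x y)) :=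
      fun q hq ↦ (hNarc q x hx y hy hxy
        (hD.notMem_arcBody hu hv hx hy huv hxy hne hq.2)).mono_right
          (arcInterior_subset_arcBody _)
    rw [← disjoint_iff_inter_eq_empty, RawDrawing.detour, arcInterior_comp, arcInterior_comp]
    refine .mono (hh u hu v hv huv).image_subset (hh x hx y hy hxy).image_subset
      (disjoint_detourRegion hN ?_ (hN_disjoint hu hv hx hy huv hxy hne)
        (hN_disjoint hx hy hu hv hxy huv hne.symm))
    exact disjoint_iff_inter_eq_empty.2 (hD.no_cross u hu v hv x hx y hy huv hxy hne)

/-- A planar drawing on `P` whose edges, moreover, pass through no point of `P`, so that the points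
of `P` not occupied by a vertex lie inside faces. -/
structure IsCleanDrawingOn (n : ℕ) (G : SimpleGraph (Fin n)) (S : Set (Fin n)) (P : Set Pt)
    (D : RawDrawing n) : Prop extends IsPlanarDrawingOn n G S P D where
  disjoint_arcInterior : ∀ u ∈ S, ∀ v ∈ S, G.Adj u v → Disjoint P (arcInterior (D.curve u v))

theorem exists_isCleanDrawingOn (G : SimpleGraph (Fin n)) (hP : P.Finite) (D : RawDrawing n) :
    ∃ D', ∀ S, IsPlanarDrawingOn n G S P D → IsCleanDrawingOn n G S P D' := by
  obtain ⟨N, hN, hdisj, hNarc⟩ :=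
    exists_nhds_pairwiseDisjoint hP fun e : Fin n × Fin n ↦ arcBody (D.curve e.1 e.2)
  have hdetour : ∀ I : Set Pt, ∃ h : Pt ≃ₜ Pt, interior I = ∅ → IsDetour P N I h := by
    intro I
    by_cases hI : interior I = ∅
    · exact (exists_isDetour hP hN hdisj hI).imp fun h hh _ ↦ hh
    · exact ⟨.refl Pt, fun hI' ↦ (hI hI').elim⟩
  choose h hh using hdetour
  refine ⟨D.detour h, fun S hD ↦ ?_⟩
  have hhS : ∀ u ∈ S, ∀ v ∈ S, G.Adj u v →
      IsDetour P N (arcInterior (D.curve u v)) (h (arcInterior (D.curve u v))) :=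
    fun u hu v hv huv ↦ hh _ (hD.arc u hu v hv huv).interior_arcInterior_eq_empty
  refine ⟨hD.detour hdisj (fun p u hu v hv huv ↦
    hNarc p (u, v) (hD.arc u hu v hv huv).isClosed_arcBody) hhS, fun u hu v hv huv ↦ ?_⟩
  rw [RawDrawing.detour, arcInterior_comp]
  exact (hhS u hu v hv huv).disjoint_image

end Drawing

section Window

variable {n ω i j : ℕ}

theorem mem_window_of_le {v : Fin n} (hv : v ∈ window n ω i) (hvj : v.val + 1 ≤ j)
    (hji : j ≤ i) : v ∈ window n ω j :=
  ⟨hvj, hji.trans hv.2⟩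

theorem window_subset_window_self (hi : i ≤ ω) : window n ω i ⊆ window n ω ω :=
  fun _ hv ↦ ⟨hv.1.trans hi, Nat.le_add_left _ _⟩

theorem ncard_window (hωi : ω ≤ i) (hin : i ≤ n) : (window n ω i).ncard = ω := by
  have himage : Fin.val '' window n ω i = Finset.Ico (i - ω) i := by
    ext m
    simp only [window, mem_image, mem_ofPred_eq, Finset.coe_Ico, mem_Ico]
    exact ⟨fun ⟨v, hv, hvm⟩ ↦ by omega, fun hm ↦ ⟨⟨m, by omega⟩, by dsimp only; omega, rfl⟩⟩
  rw [← ncard_image_of_injective _ Fin.val_injective, himage, ncard_coe_finset, Nat.card_Ico]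
  omega

theorem insert_window_inter_window_left (hω : 1 ≤ ω) {a : Fin n} (ha : a.val + 1 + ω = i) :
    insert a (window n ω (i - 1) ∩ window n ω i) = window n ω (i - 1) := by
  ext v
  simp only [window, mem_insert_iff, mem_inter_iff, mem_ofPred_eq, Fin.ext_iff]
  omega

theorem insert_window_inter_window_right (hω : 1 ≤ ω) {b : Fin n} (hb : b.val + 1 = i) :
    insert b (window n ω (i - 1) ∩ window n ω i) = window n ω i := by
  ext v
  simp only [window, mem_insert_iff, mem_inter_iff, mem_ofPred_eq, Fin.ext_iff]
  omega

end Window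

section Story

variable {n ω k i : ℕ} {G : SimpleGraph (Fin n)} {S T : Set (Fin n)} {P : Set Pt}
  {D : RawDrawing n}

/-- `D` is a single drawing of all vertices and edges of `G` whose restrictions to the window graphs
`G_1, …, G_m` are planar drawings on `P`. For `m = n` this is a realization whose drawings have been
glued into one; edges of `G` that are never visible are unconstrained. -/
def IsStoryDrawing (n ω : ℕ) (G : SimpleGraph (Fin n)) (m : ℕ) (P : Set Pt)
    (D : RawDrawing n) : Prop :=
  ∀ i, 1 ≤ i → i ≤ m → IsPlanarDrawingOn n G (window n ω i) P D

theorem Realization.agreeOn (R : Realization n ω G P) {j i : ℕ} (hj : 1 ≤ j) (hji : j ≤ i)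
    (hin : i ≤ n) : AgreeOn G (window n ω j ∩ window n ω i) (R.Γ j) (R.Γ i) := by
  induction i, hji using Nat.le_induction with
  | base => exact .refl _
  | succ i hji ih =>
    have hsub : window n ω j ∩ window n ω (i + 1) ⊆ window n ω i := fun v hv ↦
      mem_window_of_le hv.2 (hv.1.1.trans hji) i.le_succ
    have hstep : AgreeOn G (window n ω i ∩ window n ω (i + 1)) (R.Γ (i + 1)) (R.Γ i) :=
      ⟨R.pos_eq (i + 1) (by omega) hin, R.curve_eq (i + 1) (by omega) hin⟩
    exact ((ih (by omega)).mono fun v hv ↦ ⟨hv.1, hsub hv⟩).trans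
      (hstep.symm.mono fun v hv ↦ ⟨hsub hv, hv.2⟩)

/-- The drawings of a realization glued into one: every vertex and every edge is drawn as at the
time when it first becomes visible. -/
def Realization.glue (R : Realization n ω G P) : RawDrawing n where
  pos v := (R.Γ (v.val + 1)).pos v
  curve u v := (R.Γ (max u.val v.val + 1)).curve u v

theorem Realization.agreeOn_glue (R : Realization n ω G P) (hin : i ≤ n) :
    AgreeOn G (window n ω i) R.glue (R.Γ i) where
  pos_eq v hv :=
    (R.agreeOn (by omega) hv.1 hin).pos_eq v ⟨mem_window_of_le hv le_rfl hv.1, hv⟩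
  curve_eq u hu v hv huv := by
    have hmax : max u.val v.val + 1 ≤ i := by have := hu.1; have := hv.1; omega
    exact (R.agreeOn (by omega) hmax hin).curve_eq u ⟨mem_window_of_le hu (by omega) hmax, hu⟩
      v ⟨mem_window_of_le hv (by omega) hmax, hv⟩ huv

theorem realizableOn_iff_exists_isStoryDrawing :
    RealizableOn n ω G P ↔ ∃ D, IsStoryDrawing n ω G n P D := by
  constructor
  · rintro ⟨R⟩
    refine ⟨R.glue, fun i hi hin ↦
      (R.agreeOn_glue hin).isPlanarDrawingOn (R.planar i hi hin) fun u v ↦ ?_⟩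
    simp only [Realization.glue, max_comm v.val u.val]
    exact (R.planar _ (by omega) (by omega)).curve_symm u v
  · rintro ⟨D, hD⟩
    exact ⟨⟨fun _ ↦ D, hD, fun _ _ _ _ _ ↦ rfl, fun _ _ _ _ _ _ _ _ ↦ rfl⟩⟩

/-- The face-weighted embedding given by a clean drawing on `P`: the points of `P` not occupied by
a vertex are the marked points. -/
noncomputable def IsCleanDrawingOn.toWeightedDrawing {P : Finset Pt}
    (hD : IsCleanDrawingOn n G S P D) (hcard : P.card = S.ncard + k) :
    WeightedDrawing n k G S where
  D := D
  planar := hD.of_image_pos_subset (subset_univ _)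
  marks := (P.finite_toSet.sdiff (t := D.pos '' S)).toFinset
  marks_card := by
    have hsub : D.pos '' S ⊆ P := image_subset_iff.2 hD.pos_mem
    rw [← ncard_eq_toFinset_card _ _, ncard_sdiff hsub, ncard_coe_finset,
      hD.pos_inj.ncard_image, hcard, Nat.add_sub_cancel_left]
  marks_off p hp := by
    obtain ⟨hpP, hpS⟩ := (Finite.mem_toFinset _).1 hp
    simp only [drawingImage, mem_union, mem_iUnion, not_or, not_exists]
    refine ⟨hpS, fun u v hu hv huv hpuv ↦ ?_⟩
    have hp' := disjoint_left.1 (hD.disjoint_arcInterior u hu v hv huv) hpP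
    rw [(hD.arc u hu v hv huv).arcInterior_eq_sdiff, mem_sdiff, not_and_not_right] at hp'
    obtain rfl | rfl := hp' hpuv
    · exact hpS (mem_image_of_mem _ hu)
    · exact hpS (mem_image_of_mem _ hv)

theorem IsCleanDrawingOn.marks_toWeightedDrawing_union {P : Finset Pt}
    (hD : IsCleanDrawingOn n G S P D) (hcard : P.card = S.ncard + k) {a : Fin n} (ha : a ∉ T)
    (hS : insert a T = S) :
    ↑(hD.toWeightedDrawing hcard).marks ∪ {D.pos a} = (P : Set Pt) \ D.pos '' T := by
  subst hS
  have haP : D.pos a ∈ (P : Set Pt) \ D.pos '' T :=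
    ⟨hD.pos_mem a (mem_insert a T), fun h ↦
      ha ((hD.pos_inj.mem_image_iff (subset_insert a T) (mem_insert a T)).1 h)⟩
  simp only [toWeightedDrawing, Finite.coe_toFinset]
  rw [image_insert_eq, ← union_singleton, ← sdiff_sdiff,
    sdiff_union_of_subset (singleton_subset_iff.2 haP)]

theorem IsCleanDrawingOn.compatiblePair_toWeightedDrawing {P : Finset Pt} (hω : 1 ≤ ω)
    (hωi : ω + 1 ≤ i) (hin : i ≤ n) (hD : IsCleanDrawingOn n G (window n ω (i - 1)) P D)
    (hcard : P.card = (window n ω (i - 1)).ncard + k)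
    (hD' : IsCleanDrawingOn n G (window n ω i) P D)
    (hcard' : P.card = (window n ω i).ncard + k) :
    CompatiblePair n ω k G i (hD.toWeightedDrawing hcard) (hD'.toWeightedDrawing hcard') := by
  obtain ⟨a, ha⟩ : ∃ a : Fin n, a.val + 1 + ω = i := ⟨⟨i - ω - 1, by omega⟩, by dsimp only; omega⟩
  obtain ⟨b, hb⟩ : ∃ b : Fin n, b.val + 1 = i := ⟨⟨i - 1, by omega⟩, by dsimp only; omega⟩
  refine ⟨a, b, ha, hb, ?_⟩
  have hmarks := hD.marks_toWeightedDrawing_union hcard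
    (fun h ↦ by have := h.2.2; omega) (insert_window_inter_window_left hω ha)
  have hmarks' := hD'.marks_toWeightedDrawing_union hcard'
    (fun h ↦ by have := h.1.1; omega) (insert_window_inter_window_right hω hb)
  change SameMarkedEmbedding n G _ D D (_ ∪ {D.pos a}) (_ ∪ {D.pos b})
  rw [hmarks, hmarks']
  exact .refl _ _

/-- The points of the plane at the disposal of the face-weighted embedding `W`: those occupied by
the vertices, and the marked points. -/
def WeightedDrawing.points (W : WeightedDrawing n k G S) : Set Pt :=
  ↑W.marks ∪ W.D.pos '' S

namespace WeightedDrawing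

theorem finite_points (W : WeightedDrawing n k G S) : W.points.Finite :=
  W.marks.finite_toSet.union (S.toFinite.image _)

theorem ncard_points (W : WeightedDrawing n k G S) : W.points.ncard = S.ncard + k := by
  have hdisj : Disjoint (W.marks : Set Pt) (W.D.pos '' S) :=
    disjoint_left.2 fun p hp hpS ↦ W.marks_off p hp (.inl hpS)
  rw [points, ncard_union_eq hdisj, ncard_coe_finset, W.marks_card, W.planar.pos_inj.ncard_image,
    add_comm]

theorem isPlanarDrawingOn_points (W : WeightedDrawing n k G S) :
    IsPlanarDrawingOn n G S W.points W.D :=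
  W.planar.of_image_pos_subset subset_union_right

theorem points_eq_of_insert_eq (W : WeightedDrawing n k G S) {a : Fin n} (hS : insert a T = S) :
    W.points = ↑W.marks ∪ {W.D.pos a} ∪ W.D.pos '' T := by
  rw [points, union_assoc, singleton_union, ← image_insert_eq, hS]

end WeightedDrawing

theorem CompatiblePair.sameMarkedEmbedding_points (hω : 1 ≤ ω)
    {W : WeightedDrawing n k G (window n ω (i - 1))} {W' : WeightedDrawing n k G (window n ω i)}
    (h : CompatiblePair n ω k G i W W') :
    SameMarkedEmbedding n G (window n ω (i - 1) ∩ window n ω i) W.D W'.D W.points W'.points := by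
  obtain ⟨a, b, ha, hb, hsame⟩ := h
  rw [W.points_eq_of_insert_eq (insert_window_inter_window_left hω ha),
    W'.points_eq_of_insert_eq (insert_window_inter_window_right hω hb)]
  exact hsame.union_pos

theorem CompatiblePair.exists_isStoryDrawing (hω : 1 ≤ ω)
    {W : WeightedDrawing n k G (window n ω (i - 1))} {W' : WeightedDrawing n k G (window n ω i)}
    (h : CompatiblePair n ω k G i W W') (hD : IsStoryDrawing n ω G (i - 1) P D)
    (hsame : SameMarkedEmbedding n G (window n ω (i - 1)) D W.D P W.points) :
    ∃ D', IsStoryDrawing n ω G i P D' ∧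
      SameMarkedEmbedding n G (window n ω i) D' W'.D P W'.points := by
  have hpoints := h.sameMarkedEmbedding_points hω
  obtain ⟨a, b, ha, hb, -⟩ := h
  have hb_notMem : ∀ j ≤ i - 1, b ∉ window n ω j := fun j hj hbj ↦ by
    have := hbj.1
    omega
  have hextend := ((hsame.mono inter_subset_left).trans hpoints).exists_extension (b := b)
    (fun hbi ↦ hb_notMem _ le_rfl hbi.1)
    ((hD (i - 1) (by omega) le_rfl).mono inter_subset_left)
  rw [insert_window_inter_window_right hω hb] at hextend
  obtain ⟨D', hD', hsame', hagree⟩ := hextend W'.isPlanarDrawingOn_points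
  refine ⟨D', fun j hj hji ↦ ?_, hsame'⟩
  obtain rfl | hji := hji.eq_or_lt
  · exact hD'
  · exact (hagree _ (hb_notMem j (by omega))).isPlanarDrawingOn (hD j hj (by omega)) hD'.curve_symm

theorem exists_isStoryDrawing_of_compatiblePair (hω : 1 ≤ ω) (hωn : ω ≤ n)
    (W : (i : ℕ) → ω ≤ i → i ≤ n → WeightedDrawing n k G (window n ω i))
    (hW : ∀ (i : ℕ) (h1 : ω + 1 ≤ i) (h2 : i ≤ n),
      CompatiblePair n ω k G i (W (i - 1) (Nat.le_sub_one_of_lt h1) ((i.sub_le 1).trans h2))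
        (W i (Nat.le_of_succ_le h1) h2)) :
    ∃ D, IsStoryDrawing n ω G n (W ω le_rfl hωn).points D := by
  have hprefix : ∀ (m : ℕ) (hωm : ω ≤ m) (hmn : m ≤ n), ∃ D,
      IsStoryDrawing n ω G m (W ω le_rfl hωn).points D ∧
        SameMarkedEmbedding n G (window n ω m) D (W m hωm hmn).D (W ω le_rfl hωn).points
          (W m hωm hmn).points := by
    intro m hωm
    induction m, hωm using Nat.le_induction with
    | base =>
      exact fun _ ↦ ⟨(W ω le_rfl hωn).D, fun i _ hi ↦
        (W ω le_rfl hωn).isPlanarDrawingOn_points.mono (window_subset_window_self hi), .refl _ _⟩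
    | succ m hωm ih =>
      intro hmn
      obtain ⟨D, hD, hsame⟩ := ih (by omega)
      exact (hW (m + 1) (by omega) hmn).exists_isStoryDrawing hω hD hsame
  exact (hprefix n hωn le_rfl).imp fun _ h ↦ h.1

end Story

theorem realizable_iff_compatible_sequence_general (n ω k : ℕ) (G : SimpleGraph (Fin n))
    (hω : 1 ≤ ω) (hωn : ω ≤ n) :
    Realizable n ω k G ↔
      ∃ W : (i : ℕ) → ω ≤ i → i ≤ n → WeightedDrawing n k G (window n ω i),
        ∀ (i : ℕ) (h1 : ω + 1 ≤ i) (h2 : i ≤ n),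
          CompatiblePair n ω k G i
            (W (i - 1) (Nat.le_sub_one_of_lt h1) ((i.sub_le 1).trans h2))
            (W i (Nat.le_of_succ_le h1) h2) := by
  simp only [Realizable, realizableOn_iff_exists_isStoryDrawing]
  constructor
  · rintro ⟨P, hcard, D, hD⟩
    obtain ⟨D', hclean⟩ := exists_isCleanDrawingOn G P.finite_toSet D
    have hD' (i : ℕ) (h1 : ω ≤ i) (h2 : i ≤ n) : IsCleanDrawingOn n G (window n ω i) P D' :=
      hclean _ (hD i (hω.trans h1) h2)
    have hcard' (i : ℕ) (h1 : ω ≤ i) (h2 : i ≤ n) : P.card = (window n ω i).ncard + k := by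
      rw [ncard_window h1 h2, hcard]
    exact ⟨fun i h1 h2 ↦ (hD' i h1 h2).toWeightedDrawing (hcard' i h1 h2), fun i h1 h2 ↦
      IsCleanDrawingOn.compatiblePair_toWeightedDrawing hω h1 h2
        (hD' (i - 1) (Nat.le_sub_one_of_lt h1) ((i.sub_le 1).trans h2)) _
        (hD' i (Nat.le_of_succ_le h1) h2) _⟩
  · rintro ⟨W, hW⟩
    refine ⟨(W ω le_rfl hωn).finite_points.toFinset, ?_, ?_⟩
    · rw [← ncard_eq_toFinset_card _ _, (W ω le_rfl hωn).ncard_points, ncard_window le_rfl hωn]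
    · rw [Finite.coe_toFinset]
      exact exists_isStoryDrawing_of_compatiblePair hω hωn W hW

/-- **Lemma 3.** A graph story `S = (G, ω, k, τ)` is realizable if
and only if there exists a sequence `⟨φ_ω, φ_{ω+1}, …, φ_n⟩` of
face-`k`-weighted planar embeddings of the window graphs `⟨G_ω, …, G_n⟩` such
that `φ_{i-1}` and `φ_i` are compatible for every `i` with `ω + 1 ≤ i ≤ n`. -/
theorem realizable_iff_compatible_sequence (n ω k : ℕ) (G : SimpleGraph (Fin n))
    (hω : 1 ≤ ω) (hωn : ω ≤ n) (hvis : Visible n ω G) :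
    Realizable n ω k G ↔
      ∃ W : (i : ℕ) → ω ≤ i → i ≤ n → WeightedDrawing n k G (window n ω i),
        ∀ (i : ℕ) (h1 : ω + 1 ≤ i) (h2 : i ≤ n),
          CompatiblePair n ω k G i
            (W (i - 1) (by omega) (by omega)) (W i (by omega) h2) :=
  realizable_iff_compatible_sequence_general n ω k G hω hωn

end GraphStories
end

section
/- For every integer ω ≥ 5, there exists a minimal graph story S = (G, ω, τ) such that G is a series-parallel graph and S is not realizable. For ω = 5 this is witnessed by an 8-vertex series-parallel graph all of whose four possible embeddings of G_5 lead to a graph G_7 in which the 3-cycle on vertices v_3, v_4, v_5 separates v_6 from v_7, or to a graph G_8 in which the 3-cycle on v_4, v_5, v_6 separates v_7 from v_8; for ω > 5 the same graph padded with ω − 5 isolated vertices inserted in τ works. -/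
open Set

namespace GraphStories

/-- `G` has a `K₄` minor: there are four pairwise disjoint connected branch
sets, pairwise joined by an edge of `G`. -/
def HasK4Minor {V : Type*} (G : SimpleGraph V) : Prop :=
  ∃ B : Fin 4 → Set V,
    (∀ i, (SimpleGraph.induce (B i) G).Connected) ∧
    (Pairwise fun i j => Disjoint (B i) (B j)) ∧
    ∀ i j, i ≠ j → ∃ u ∈ B i, ∃ v ∈ B j, G.Adj u v

/-- A series-parallel graph is a graph with no `K₄` minor. -/
def SeriesParallel {V : Type*} (G : SimpleGraph V) : Prop := ¬ HasK4Minor G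

/-!
In a minimal story the entering vertex must take the point freed by the leaving one, so the point
of a vertex depends only on its index modulo `ω`. Superposing all drawings of a realization
therefore folds `G` up along residues modulo `ω`. Here the result is a drawing of `K₅` in which any
two independent edges share a window, and hence do not cross.

That is impossible by a parity argument. Count the turns of every edge of `K₅` around every vertex
off it, by means of continuous logarithms. If two independent edges do not cross, the turns of each
around the endpoints of the other sum to the same parity as their number of crossings in the convex
drawing. Each vertex off an edge occurs in exactly two of these sums, so the convex drawing would
have an even number of crossings; but it has five.

The graph `G` has no `K₄` minor because it has a path decomposition of width two.
-/

section LogIncrement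

open Complex

theorem exists_continuous_log {A : Type*} [TopologicalSpace A] [SimplyConnectedSpace A]
    [LocallyPathConnectedSpace A] {g : A → ℂ} (hg : Continuous g) (hg₀ : ∀ a, g a ≠ 0) :
    ∃ L : A → ℂ, Continuous L ∧ ∀ a, exp (L a) = g a := by
  obtain ⟨a₀⟩ : Nonempty A := inferInstance
  obtain ⟨L, ⟨-, hL⟩, -⟩ := isCoveringMapOn_exp.existsUnique_continuousMap_lifts
    ⟨g, hg⟩ (exp_log (hg₀ a₀)) hg₀
  exact ⟨L, L.continuous, congrFun hL⟩

/-- The value `w` is the total change over `[0, 1]` of a continuous logarithm of the nonvanishing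
path `g`, i.e. `w = ∫ dg/g`. It is a relation rather than a function so that no value
has to be assigned to paths through `0`. -/
def HasLogIncrement (g : ℝ → ℂ) (w : ℂ) : Prop :=
  ∃ L : ℝ → ℂ, Continuous L ∧ (∀ t, exp (L t) = g t) ∧ L 1 - L 0 = w

theorem HasLogIncrement.unique {g : ℝ → ℂ} {w w' : ℂ} (h : HasLogIncrement g w)
    (h' : HasLogIncrement g w') : w = w' := by
  obtain ⟨L, hL, hLg, rfl⟩ := h
  obtain ⟨M, hM, hMg, rfl⟩ := h'
  have hLM : L = fun t => M t + (L 0 - M 0) := by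
    refine isCoveringMap_exp.eq_of_comp_eq hL (by fun_prop) ?_ 0 (by ring)
    funext t
    simp only [Function.comp_apply, Subtype.mk.injEq, exp_add, exp_sub, hLg, hMg]
    rw [div_self (hMg 0 ▸ exp_ne_zero _), mul_one]
  rw [congrFun hLM 1]
  ring

theorem exists_int_hasLogIncrement {g : ℝ → ℂ} (hg : Continuous g) (hg₀ : ∀ t, g t ≠ 0) {x y : ℂ}
    (hx : exp x = g 0) (hy : exp y = g 1) :
    ∃ n : ℤ, HasLogIncrement g (y - x + n * (2 * Real.pi * I)) := by
  obtain ⟨L, hL, hLg⟩ := exists_continuous_log hg hg₀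
  have hexp : exp (L 1 - L 0) = exp (y - x) := by simp only [exp_sub, hx, hy, hLg]
  obtain ⟨n, hn⟩ := exp_eq_exp_iff_exists_int.1 hexp
  exact ⟨n, L, hL, hLg, hn⟩

/-- Both sides are the mixed second difference over the unit square of a continuous logarithm of
`e s - f t`; replacing it by a logarithm of `f t - e s` only adds the constant `π i`. -/
theorem HasLogIncrement.sub_eq_sub {e f : ℝ → ℂ} (he : Continuous e) (hf : Continuous f)
    (hef : ∀ s t, e s ≠ f t) {a b c d : ℂ}
    (ha : HasLogIncrement (fun s => e s - f 1) a) (hb : HasLogIncrement (fun s => e s - f 0) b)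
    (hc : HasLogIncrement (fun t => f t - e 1) c) (hd : HasLogIncrement (fun t => f t - e 0) d) :
    a - b = c - d := by
  obtain ⟨L, hL, hLef⟩ := exists_continuous_log (A := ℝ × ℝ) (g := fun x => e x.1 - f x.2)
    (by fun_prop) (fun x => sub_ne_zero.2 (hef _ _))
  have hrow (t : ℝ) : HasLogIncrement (fun s => e s - f t) (L (1, t) - L (0, t)) :=
    ⟨fun s => L (s, t), by fun_prop, fun s => hLef (s, t), rfl⟩
  have hcol (s : ℝ) : HasLogIncrement (fun t => f t - e s) (L (s, 1) - L (s, 0)) :=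
    ⟨fun t => L (s, t) + Real.pi * I, by fun_prop,
      fun t => by rw [exp_add, exp_pi_mul_I, hLef, mul_neg_one, neg_sub], by ring⟩
  rw [ha.unique (hrow 1), hb.unique (hrow 0), hc.unique (hcol 1), hd.unique (hcol 0)]
  ring

end LogIncrement

section Turns

open Complex

variable {ι : Type*} [LinearOrder ι] {p : ι → ℂ} {i j k l : ι}

/-- A logarithm of `p u - p w`, with the branches chosen so that exchanging `u` and `w` changes it
by `π i`. -/
noncomputable def chordLog (p : ι → ℂ) (u w : ι) : ℂ :=
  if u < w then log (p u - p w) else log (p w - p u) + Real.pi * I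

theorem exp_chordLog (h : p i ≠ p j) : exp (chordLog p i j) = p i - p j := by
  unfold chordLog
  split_ifs
  · exact exp_log (sub_ne_zero.2 h)
  · rw [exp_add, exp_pi_mul_I, exp_log (sub_ne_zero.2 h.symm), mul_neg_one, neg_sub]

theorem chordLog_swap_sub_of_lt (h : i < j) :
    chordLog p j i - chordLog p i j = Real.pi * I := by
  simp [chordLog, h, h.not_gt]

/-- The path `e` from `p i` to `p j` makes `n` turns around `p k` more than prescribed by the
chosen logarithms of `p i - p k` and `p j - p k`. -/
def HasTurns (p : ι → ℂ) (i j k : ι) (e : ℝ → ℂ) (n : ℤ) : Prop :=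
  HasLogIncrement (fun t => e t - p k)
    (chordLog p j k - chordLog p i k + n * (2 * Real.pi * I))

theorem exists_hasTurns {e : ℝ → ℂ} (he : Continuous e) (he₀ : e 0 = p i) (he₁ : e 1 = p j)
    (hk : ∀ t, e t ≠ p k) : ∃ n, HasTurns p i j k e n :=
  exists_int_hasLogIncrement (by fun_prop) (fun t => sub_ne_zero.2 (hk t))
    (by rw [exp_chordLog (he₀ ▸ hk 0), he₀]) (by rw [exp_chordLog (he₁ ▸ hk 1), he₁])

/-- The right-hand side counts the crossings of the chords `ij` and `kl` when `ι` is placed in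
order on a circle. -/
theorem HasTurns.sub_sub_add {e f : ℝ → ℂ} {a b c d : ℤ} (he : Continuous e) (hf : Continuous f)
    (he₀ : e 0 = p i) (he₁ : e 1 = p j) (hf₀ : f 0 = p k) (hf₁ : f 1 = p l)
    (hef : ∀ s t, e s ≠ f t) (hkl : k < l) (hik : i < k) (hjk : j ≠ k) (hjl : j ≠ l)
    (ha : HasTurns p i j l e a) (hb : HasTurns p i j k e b)
    (hc : HasTurns p k l j f c) (hd : HasTurns p k l i f d) :
    a - b - c + d = if k < j ∧ j < l then 1 else 0 := by
  unfold HasTurns at ha hb hc hd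
  rw [← hf₁] at ha
  rw [← hf₀] at hb
  rw [← he₁] at hc
  rw [← he₀] at hd
  have hexchange := HasLogIncrement.sub_eq_sub he hf hef ha hb hc hd
  have hIL := chordLog_swap_sub_of_lt (p := p) (hik.trans hkl)
  have hIK := chordLog_swap_sub_of_lt (p := p) hik
  have hpi : (2 * Real.pi * I : ℂ) ≠ 0 := two_pi_I_ne_zero
  suffices h : ((a - b - c + d : ℤ) : ℂ) * (2 * Real.pi * I) =
      ((if k < j ∧ j < l then 1 else 0 : ℤ) : ℂ) * (2 * Real.pi * I) from
    Int.cast_injective (mul_right_cancel₀ hpi h)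
  push_cast
  rcases hjk.lt_or_gt with hjk | hjk
  · have hJK := chordLog_swap_sub_of_lt (p := p) hjk
    have hJL := chordLog_swap_sub_of_lt (p := p) (hjk.trans hkl)
    rw [if_neg fun h => hjk.not_gt h.1]
    linear_combination hexchange + hJL - hJK - hIL + hIK
  have hJK := chordLog_swap_sub_of_lt (p := p) hjk
  rcases hjl.lt_or_gt with hjl | hjl <;> have hJL := chordLog_swap_sub_of_lt (p := p) hjl
  · rw [if_pos ⟨hjk, hjl⟩]
    linear_combination hexchange + hJL + hJK - hIL + hIK
  · rw [if_neg fun h => hjl.not_gt h.2]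
    linear_combination hexchange - hJL + hJK - hIL + hIK

end Turns

section VanKampenFlores

open scoped Finset

/-- The fifteen unordered pairs `{ij, kl}` of vertex-disjoint edges of `K₅`, each listed once as
`(i, j, k, l)` with `i < j`, `k < l` and `i < k`. -/
def independentPairs : Finset (Fin 5 × Fin 5 × Fin 5 × Fin 5) :=
  {(1, 2, 3, 4), (1, 3, 2, 4), (1, 4, 2, 3), (0, 2, 3, 4), (0, 3, 2, 4), (0, 4, 2, 3),
    (0, 1, 3, 4), (0, 3, 1, 4), (0, 4, 1, 3), (0, 1, 2, 4), (0, 2, 1, 4), (0, 4, 1, 2),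
    (0, 1, 2, 3), (0, 2, 1, 3), (0, 3, 1, 2)}

theorem lt_and_ne_of_mem_independentPairs {i j k l : Fin 5} (h : (i, j, k, l) ∈ independentPairs) :
    i < j ∧ k < l ∧ i < k ∧ j ≠ k ∧ j ≠ l := by
  have hall : ∀ q ∈ independentPairs, q.1 < q.2.1 ∧ q.2.2.1 < q.2.2.2 ∧ q.1 < q.2.2.1 ∧
      q.2.1 ≠ q.2.2.1 ∧ q.2.1 ≠ q.2.2.2 := by
    simp [independentPairs]
  exact hall _ h

/-- The four ways to take an edge of an independent pair `(i, j, k, l)` together with an endpoint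
of the other edge. -/
def edgeVertexPairs : Fin 5 × Fin 5 × Fin 5 × Fin 5 → Finset (Fin 5 × Fin 5 × Fin 5)
  | (i, j, k, l) => {(i, j, l), (i, j, k), (k, l, j), (k, l, i)}

/-- Every term occurs twice, as a vertex off an edge of `K₅` lies on exactly two edges disjoint from
it. -/
theorem sum_edgeVertexPairs_eq_zero (m : Fin 5 × Fin 5 × Fin 5 → ZMod 2) :
    ∑ q ∈ independentPairs, ∑ x ∈ edgeVertexPairs q, m x = 0 := by
  simp only [independentPairs, Fin.isValue, edgeVertexPairs, Finset.mem_insert, Prod.mk.injEq,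
    Fin.reduceEq, and_true, and_self, and_false, one_ne_zero, Finset.mem_singleton, or_self,
    not_false_eq_true, Finset.sum_insert, Finset.sum_singleton, zero_ne_one]
  grind [CharTwo.add_self_eq_zero]

/-- The convex drawing of `K₅` has five crossings. -/
theorem sum_chord_crossings_eq_one :
    ∑ q ∈ independentPairs,
      (if q.2.2.1 < q.2.1 ∧ q.2.1 < q.2.2.2 then 1 else 0 : ZMod 2) = 1 := by
  have hcard : #{q ∈ independentPairs | q.2.2.1 < q.2.1 ∧ q.2.1 < q.2.2.2} = 5 := by
    simp [independentPairs, Finset.filter_insert]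
  rw [Finset.sum_boole, hcard]
  rfl

theorem notMem_of_pairwise_disjoint {X : Type*} [TopologicalSpace X] {p : Fin 5 → X}
    {A : Fin 5 → Fin 5 → Set X} (hA : ∀ i j, i ≠ j → JoinedIn (A i j) (p i) (p j))
    (hdisj : ∀ i j k l, [i, j, k, l].Nodup → Disjoint (A i j) (A k l)) {i j k : Fin 5}
    (hijk : [i, j, k].Nodup) : p k ∉ A i j := by
  obtain ⟨l, hl⟩ : ∃ l, [i, j, k, l].Nodup := by
    revert i j k
    decide
  have hkl : k ≠ l := by
    rintro rfl
    simp at hl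
  exact fun hk => (hdisj i j k l hl).notMem_of_mem_left hk (hA k l hkl).source_mem

/-- **Van Kampen–Flores theorem in the plane**: Hanani–Tutte style, the number of crossings between
independent edges of a drawing of `K₅` is odd because it is so for the convex drawing. -/
theorem exists_inter_nonempty_of_joinedIn {p : Fin 5 → ℂ} {A : Fin 5 → Fin 5 → Set ℂ}
    (hA : ∀ i j, i ≠ j → JoinedIn (A i j) (p i) (p j)) :
    ∃ i j k l, [i, j, k, l].Nodup ∧ (A i j ∩ A k l).Nonempty := by
  by_contra! hdisj
  simp only [← disjoint_iff_inter_eq_empty] at hdisj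
  have hpath (i j) (hij : i ≠ j) :
      ∃ e : ℝ → ℂ, Continuous e ∧ e 0 = p i ∧ e 1 = p j ∧ ∀ t, e t ∈ A i j :=
    have ⟨γ, hγ⟩ := hA i j hij
    ⟨γ.extend, by fun_prop, by simp, by simp, fun t => hγ _⟩
  choose! e he he₀ he₁ heA using hpath
  have hturns (x : Fin 5 × Fin 5 × Fin 5) (hx : [x.1, x.2.1, x.2.2].Nodup) :
      ∃ n, HasTurns p x.1 x.2.1 x.2.2 (e x.1 x.2.1) n := by
    have hne : x.1 ≠ x.2.1 := by
      intro h
      simp [h] at hx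
    exact exists_hasTurns (he _ _ hne) (he₀ _ _ hne) (he₁ _ _ hne) fun t =>
      ne_of_mem_of_not_mem (heA _ _ hne t) (notMem_of_pairwise_disjoint hA hdisj hx)
  choose! n hn using hturns
  have hcross : ∀ q ∈ independentPairs, ∑ x ∈ edgeVertexPairs q, (n x : ZMod 2) =
      if q.2.2.1 < q.2.1 ∧ q.2.1 < q.2.2.2 then 1 else 0 := by
    rintro ⟨i, j, k, l⟩ hq
    obtain ⟨hij, hkl, hik, hjk, hjl⟩ := lt_and_ne_of_mem_independentPairs hq
    have hil := hik.trans hkl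
    have hef (s t) : e i j s ≠ e k l t :=
      (hdisj i j k l (by grind)).ne_of_mem (heA _ _ hij.ne s) (heA _ _ hkl.ne t)
    have hsum := HasTurns.sub_sub_add (he _ _ hij.ne) (he _ _ hkl.ne) (he₀ _ _ hij.ne)
      (he₁ _ _ hij.ne) (he₀ _ _ hkl.ne) (he₁ _ _ hkl.ne) hef hkl hik hjk hjl
      (hn (i, j, l) (by grind)) (hn (i, j, k) (by grind)) (hn (k, l, j) (by grind))
      (hn (k, l, i) (by grind))
    have hsum₂ := congrArg (Int.cast : ℤ → ZMod 2) hsum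
    push_cast [CharTwo.sub_eq_add] at hsum₂
    rw [← hsum₂, edgeVertexPairs, Finset.sum_insert (by grind), Finset.sum_insert (by grind),
      Finset.sum_insert (by grind), Finset.sum_singleton]
    ring
  have hzero := sum_edgeVertexPairs_eq_zero fun x => n x
  rw [Finset.sum_congr rfl hcross, sum_chord_crossings_eq_one] at hzero
  exact absurd hzero one_ne_zero

theorem exists_inter_nonempty_of_joinedIn_of_injective {X : Type*} [TopologicalSpace X] {f : X → ℂ}
    (hf : Continuous f) (hinj : f.Injective) {p : Fin 5 → X} {A : Fin 5 → Fin 5 → Set X}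
    (hA : ∀ i j, i ≠ j → JoinedIn (A i j) (p i) (p j)) :
    ∃ i j k l, [i, j, k, l].Nodup ∧ (A i j ∩ A k l).Nonempty := by
  simpa only [← image_inter hinj, image_nonempty] using
    exists_inter_nonempty_of_joinedIn fun i j hij => (hA i j hij).map hf

end VanKampenFlores

section PathDecompositions

variable {V W T : Type*} [LinearOrder T] {G : SimpleGraph V} {bag : T → Set V}

theorem exists_forall_mem_of_pairwise_inter_nonempty {ι : Type*} [Finite ι] [Nonempty ι]
    {S : ι → Set T} (hS : ∀ i, (S i).OrdConnected) (hinter : ∀ i j, (S i ∩ S j).Nonempty) :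
    ∃ t, ∀ i, t ∈ S i := by
  choose x hx using hinter
  choose j hj using fun i => Finite.exists_min (x i)
  obtain ⟨i, hi⟩ := Finite.exists_max fun i => x i (j i)
  exact ⟨x i (j i), fun k => (hS k).out (hx k (j k)).1 (hx i k).2 ⟨hi k, hj i k⟩⟩

/-- A path decomposition of `G`, with bags indexed by a linear order: both ends of each edge share
a bag, and the bags containing a given vertex are consecutive. Isolated vertices are not required
to lie in a bag. -/
structure IsPathDecomposition (G : SimpleGraph V) (bag : T → Set V) : Prop where
  ordConnected : ∀ v, {t | v ∈ bag t}.OrdConnected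
  exists_mem_bag : ∀ ⦃u v⦄, G.Adj u v → ∃ t, u ∈ bag t ∧ v ∈ bag t

namespace IsPathDecomposition

theorem map (h : IsPathDecomposition G bag) (f : V ↪ W) :
    IsPathDecomposition (G.map f) fun t => f '' bag t where
  ordConnected w := by
    by_cases hw : w ∈ range f
    · obtain ⟨v, rfl⟩ := hw
      simpa only [f.injective.mem_set_image] using h.ordConnected v
    · convert ordConnected_empty (α := T)
      exact eq_empty_of_forall_notMem fun t ht => hw (image_subset_range f _ ht)
  exists_mem_bag := by
    rintro _ _ ⟨-, u, v, huv, rfl, rfl⟩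
    obtain ⟨t, hu, hv⟩ := h.exists_mem_bag huv
    exact ⟨t, mem_image_of_mem f hu, mem_image_of_mem f hv⟩

theorem ordConnected_of_preconnected (h : IsPathDecomposition G bag) {B : Set V}
    (hB : (G.induce B).Preconnected) : {t | (B ∩ bag t).Nonempty}.OrdConnected := by
  refine ⟨fun s ⟨v, hvB, hv⟩ s' ⟨v', hvB', hv'⟩ t ht => ?_⟩
  by_contra hBt
  suffices hleft : ∀ w : B, ∃ r ≤ t, w.1 ∈ bag r by
    obtain ⟨r, hr, hvr⟩ := hleft ⟨v', hvB'⟩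
    exact hBt ⟨v', hvB', (h.ordConnected v').out hvr hv' ⟨hr, ht.2⟩⟩
  intro w
  induction (SimpleGraph.reachable_iff_reflTransGen ..).1 (hB ⟨v, hvB⟩ w) with
  | refl => exact ⟨s, ht.1, hv⟩
  | @tail a b _ hab ha =>
    obtain ⟨r, hr, har⟩ := ha
    obtain ⟨q, haq, hbq⟩ := h.exists_mem_bag hab
    refine ⟨q, le_of_not_gt fun htq => hBt ⟨a, a.2, ?_⟩, hbq⟩
    exact (h.ordConnected a).out har haq ⟨hr, htq.le⟩

/-- By the Helly property of intervals, a single bag meets all branch sets of a `K₄` minor. -/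
theorem seriesParallel (h : IsPathDecomposition G bag) (hbag : ∀ t, (bag t).encard ≤ 3) :
    SeriesParallel G := by
  rintro ⟨B, hconn, hdisj, hedge⟩
  have hshared (i j) (hij : i ≠ j) :
      ({t | (B i ∩ bag t).Nonempty} ∩ {t | (B j ∩ bag t).Nonempty}).Nonempty := by
    obtain ⟨u, hu, v, hv, huv⟩ := hedge i j hij
    obtain ⟨t, hut, hvt⟩ := h.exists_mem_bag huv
    exact ⟨t, ⟨u, hu, hut⟩, v, hv, hvt⟩
  obtain ⟨t, ht⟩ := exists_forall_mem_of_pairwise_inter_nonempty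
    (fun i => h.ordConnected_of_preconnected (hconn i).preconnected) fun i j => by
      obtain rfl | hij := eq_or_ne i j
      · obtain ⟨j, hij⟩ := exists_ne i
        exact (hshared i j hij.symm).mono fun t ht => ⟨ht.1, ht.1⟩
      · exact hshared i j hij
  choose v hvB hvt using ht
  have hv : Function.Injective v := fun i j hij => by
    by_contra hne
    exact (hdisj hne).ne_of_mem (hvB i) (hvB j) hij
  have hcard := hv.encard_range.trans ((encard_le_encard (range_subset_iff.2 hvt)).trans (hbag t))
  rw [ENat.card_eq_coe_fintype_card, Fintype.card_fin] at hcard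
  exact absurd hcard (by decide)

end IsPathDecomposition

end PathDecompositions

section Drawings

variable {n : ℕ} {G : SimpleGraph (Fin n)} {S : Set (Fin n)} {P : Set Pt} {D : RawDrawing n}
  {u v x y : Fin n}

theorem IsArcFrom.arcBody_eq {γ : ℝ → Pt} {a b : Pt} (h : IsArcFrom γ a b) :
    arcBody γ = arcInterior γ ∪ {a, b} := by
  rw [arcBody, arcInterior, ← Ioo_union_both zero_le_one, image_union, image_pair, h.2.2.1, h.2.2.2]

theorem IsArcFrom.joinedIn {γ : ℝ → Pt} {a b : Pt} (h : IsArcFrom γ a b) :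
    JoinedIn (arcBody γ) a b :=
  JoinedIn.ofLine h.1 h.2.2.1 h.2.2.2 subset_rfl

theorem IsPlanarDrawingOn.disjoint_arcBody (h : IsPlanarDrawingOn n G S P D)
    (hu : u ∈ S) (hv : v ∈ S) (hx : x ∈ S) (hy : y ∈ S) (huv : G.Adj u v) (hxy : G.Adj x y)
    (hdistinct : [u, v, x, y].Nodup) :
    Disjoint (arcBody (D.curve u v)) (arcBody (D.curve x y)) := by
  rw [(h.arc u hu v hv huv).arcBody_eq, (h.arc x hx y hy hxy).arcBody_eq]
  have hoff := h.vertex_off_arc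
  refine disjoint_union_left.2 ⟨disjoint_union_right.2 ⟨?_, ?_⟩, disjoint_union_right.2 ⟨?_, ?_⟩⟩
  · exact disjoint_iff_inter_eq_empty.2 (h.no_cross u hu v hv x hx y hy huv hxy (by grind))
  · simp [hoff u hu v hv huv, hx, hy]
  · simp [hoff x hx y hy hxy, hu, hv]
  · have hne {a b : Fin n} (ha : a ∈ S) (hb : b ∈ S) : a ≠ b → D.pos a ≠ D.pos b :=
      (h.pos_inj.ne_iff ha hb).2
    rw [disjoint_left]
    grind

end Drawings

namespace Realization

variable {n ω : ℕ} {G : SimpleGraph (Fin n)} {P : Set Pt} {u v : Fin n} {i : ℕ}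

/-- The superposition of the drawings of a realization: each vertex and each edge is drawn
as it is when it first appears. -/
def superposition (R : Realization n ω G P) : RawDrawing n where
  pos v := (R.Γ (v + 1)).pos v
  curve u v := (R.Γ (max u v + 1)).curve u v

theorem pos_eq_superposition (R : Realization n ω G P) (hi : i ≤ n) (hv : v ∈ window n ω i) :
    (R.Γ i).pos v = R.superposition.pos v := by
  obtain ⟨hvi, hiv⟩ := hv
  induction i, hvi using Nat.le_induction with
  | base => rfl
  | succ i hvi ih =>
    rw [R.pos_eq (i + 1) (by lia) hi v ⟨⟨hvi, by lia⟩, by lia, hiv⟩]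
    exact ih (by lia) (by lia)

theorem curve_eq_superposition (R : Realization n ω G P) (huv : G.Adj u v) (hi : i ≤ n)
    (hu : u ∈ window n ω i) (hv : v ∈ window n ω i) :
    (R.Γ i).curve u v = R.superposition.curve u v := by
  obtain ⟨hui, hiu⟩ := hu
  obtain ⟨hvi, hiv⟩ := hv
  have hmax : max u.val v.val + 1 ≤ i := by lia
  induction i, hmax using Nat.le_induction with
  | base => rfl
  | succ i hmax ih =>
    rw [R.curve_eq (i + 1) (by lia) hi u ⟨⟨by lia, by lia⟩, by lia, hiu⟩ v
      ⟨⟨by lia, by lia⟩, by lia, hiv⟩ huv]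
    exact ih (by lia) (by lia) (by lia) (by lia) (by lia)

theorem isPlanarDrawingOn_superposition (R : Realization n ω G P) (hi₁ : 1 ≤ i) (hi : i ≤ n) :
    IsPlanarDrawingOn n G (window n ω i) P R.superposition := by
  have h := R.planar i hi₁ hi
  have hpos : EqOn (R.Γ i).pos R.superposition.pos (window n ω i) := fun v hv =>
    R.pos_eq_superposition hi hv
  have hcurve := fun u hu v hv (huv : G.Adj u v) => R.curve_eq_superposition huv hi hu hv
  exact {
    pos_mem := fun v hv => hpos hv ▸ h.pos_mem v hv
    pos_inj := h.pos_inj.congr hpos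
    curve_symm := fun u v => by
      simp only [superposition, max_comm v u]
      exact (R.planar _ (by lia) (by lia)).curve_symm u v
    arc := fun u hu v hv huv => by
      rw [← hpos hu, ← hpos hv, ← hcurve u hu v hv huv]
      exact h.arc u hu v hv huv
    vertex_off_arc := fun u hu v hv huv w hw => by
      rw [← hpos hw, ← hcurve u hu v hv huv]
      exact h.vertex_off_arc u hu v hv huv w hw
    no_cross := fun u hu v hv x hx y hy huv hxy => by
      rw [← hcurve u hu v hv huv, ← hcurve x hx y hy hxy]
      exact h.no_cross u hu v hv x hx y hy huv hxy }

/-- The `ω - 1` vertices strictly between `u` and `v` share a window with `u` and another one with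
`v`, so they leave a single point to both. -/
theorem pos_superposition_eq_of_eq_add {P : Finset Pt} (R : Realization n ω G P) (hP : P.card ≤ ω)
    (hv : v.val = u + ω) : R.superposition.pos v = R.superposition.pos u := by
  obtain rfl | hω := Nat.eq_zero_or_pos ω
  · rw [Fin.ext hv]
  have hinj {a b : Fin n} (i : ℕ) (hi : i ≤ n) (ha : a ∈ window n ω i) (hb : b ∈ window n ω i) :
      R.superposition.pos a = R.superposition.pos b → a = b :=
    (R.isPlanarDrawingOn_superposition (by have := ha.1; lia) hi).pos_inj ha hb
  have hmem (a : Fin n) : R.superposition.pos a ∈ P :=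
    (R.isPlanarDrawingOn_superposition (i := a + 1) (by lia) a.2).pos_mem a ⟨le_rfl, by lia⟩
  obtain ⟨a, ha, b, hb, hab, hpos⟩ := Finset.exists_ne_map_eq_of_card_lt_of_maps_to
    (s := Finset.Icc u v) (t := P) (by rw [Fin.card_Icc]; lia) fun a _ => hmem a
  rw [Finset.mem_Icc] at ha hb
  wlog hlt : a < b generalizing a b
  · exact this b hb a ha hab.symm hpos.symm (by lia)
  have hau : a = u := by
    by_contra h
    exact hab (hinj (v + 1) v.2 ⟨by lia, by lia⟩ ⟨by lia, by lia⟩ hpos)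
  have hbv : b = v := by
    by_contra h
    exact hab (hinj v v.2.le ⟨by lia, by lia⟩ ⟨by lia, by lia⟩ hpos)
  rw [← hau, ← hbv, hpos]

theorem pos_superposition_eq_of_modEq {P : Finset Pt} (R : Realization n ω G P) (hP : P.card ≤ ω)
    (huv : u ≡ v [MOD ω]) : R.superposition.pos u = R.superposition.pos v := by
  wlog hle : u ≤ v generalizing u v
  · exact (this huv.symm (le_of_not_ge hle)).symm
  obtain ⟨k, hk⟩ := (Nat.modEq_iff_dvd' hle).1 huv
  suffices h : ∀ (k : ℕ) (w : Fin n), w.val = u + ω * k →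
      R.superposition.pos u = R.superposition.pos w from h k v (by lia)
  intro k
  induction k with
  | zero => exact fun w hw => by rw [Fin.ext (show w.val = u by lia)]
  | succ k ih =>
    intro w hw
    rw [mul_add_one, ← add_assoc] at hw
    let w' : Fin n := ⟨u + ω * k, by lia⟩
    rw [R.pos_superposition_eq_of_eq_add (u := w') hP hw]
    exact ih w' rfl

theorem joinedIn_arcBody_superposition (R : Realization n ω G P) (hG : Visible n ω G)
    (huv : G.Adj u v) :
    JoinedIn (arcBody (R.superposition.curve u v)) (R.superposition.pos u)
      (R.superposition.pos v) := by
  obtain ⟨huω, hvω⟩ := hG u v huv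
  exact ((R.isPlanarDrawingOn_superposition (i := max u.val v + 1) (by lia) (by lia)).arc
    u ⟨by lia, by lia⟩ v ⟨by lia, by lia⟩ huv).joinedIn

theorem disjoint_arcBody_superposition (R : Realization n ω G P) {u' v' : Fin n}
    (huv : G.Adj u v) (huv' : G.Adj u' v') (hdistinct : [u, v, u', v'].Nodup) (hi : i ≤ n)
    (hwindow : {u, v, u', v'} ⊆ window n ω i) :
    Disjoint (arcBody (R.superposition.curve u v)) (arcBody (R.superposition.curve u' v')) := by
  simp only [insert_subset_iff, singleton_subset_iff] at hwindow
  obtain ⟨hu, hv, hu', hv'⟩ := hwindow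
  exact (R.isPlanarDrawingOn_superposition (by have := hu.1; lia) hi).disjoint_arcBody
    hu hv hu' hv' huv huv' hdistinct

end Realization

/-- Vertices congruent modulo `ω` share a point, so that the superposed drawings show a `K₅` on the
points of the residues `x i`. -/
theorem not_realizable_of_lifts_completeGraph {n ω : ℕ} {G : SimpleGraph (Fin n)}
    (hG : Visible n ω G) {x : Fin 5 → ZMod ω} (hx : x.Injective)
    (hlift : ∀ i j, i ≠ j → ∃ u v : Fin n, G.Adj u v ∧ (u : ZMod ω) = x i ∧ (v : ZMod ω) = x j)
    (hwindow : ∀ u v u' v' : Fin n, G.Adj u v → G.Adj u' v' →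
      ([u, v, u', v'].map fun w : Fin n => (w : ZMod ω)).Nodup →
      ∃ i ≤ n, {u, v, u', v'} ⊆ window n ω i) :
    ¬ Realizable n ω 0 G := by
  rintro ⟨P, hP, ⟨R⟩⟩
  have hvertex (i : Fin 5) : ∃ w : Fin n, (w : ZMod ω) = x i := by
    obtain ⟨j, hj⟩ := exists_ne i
    obtain ⟨u, -, -, hu, -⟩ := hlift i j hj.symm
    exact ⟨u, hu⟩
  choose w hw using hvertex
  have hpos {v : Fin n} {i : Fin 5} (hv : (v : ZMod ω) = x i) :
      R.superposition.pos v = R.superposition.pos (w i) :=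
    R.pos_superposition_eq_of_modEq hP.le
      ((ZMod.natCast_eq_natCast_iff ..).1 (hv.trans (hw i).symm))
  let A (i j : Fin 5) : Set Pt := {z | ∃ u v : Fin n, G.Adj u v ∧ (u : ZMod ω) = x i ∧
    (v : ZMod ω) = x j ∧ z ∈ arcBody (R.superposition.curve u v)}
  have hA (i j : Fin 5) (hij : i ≠ j) :
      JoinedIn (A i j) (R.superposition.pos (w i)) (R.superposition.pos (w j)) := by
    obtain ⟨u, v, huv, hu, hv⟩ := hlift i j hij
    rw [← hpos hu, ← hpos hv]
    exact (R.joinedIn_arcBody_superposition hG huv).mono fun z hz => ⟨u, v, huv, hu, hv, hz⟩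
  obtain ⟨i, j, k, l, h, z, ⟨u, v, huv, hu, hv, hz⟩, u', v', huv', hu', hv', hz'⟩ :=
    exists_inter_nonempty_of_joinedIn_of_injective Complex.equivRealProdCLM.symm.continuous
      Complex.equivRealProdCLM.symm.injective hA
  have hresidues : ([u, v, u', v'].map fun w : Fin n => (w : ZMod ω)).Nodup := by
    simpa only [List.map_cons, List.map_nil, hu, hv, hu', hv'] using h.map hx
  obtain ⟨m, hm, hmem⟩ := hwindow u v u' v' huv huv' hresidues
  exact disjoint_left.1
    (R.disjoint_arcBody_superposition huv huv' hresidues.of_map hm hmem) hz hz'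

section Construction

/-- The graph of the story for `ω = 5`, with `i : Fin 8` standing for `v_{i + 1}`. Reduction
modulo `5` maps its edges bijectively onto those of `K₅`. -/
def coreGraph : SimpleGraph (Fin 8) :=
  SimpleGraph.fromEdgeSet {s(0, 2), s(1, 3), s(1, 4), s(2, 3), s(2, 4), s(3, 4), s(3, 5), s(4, 5),
    s(5, 6), s(6, 7)}

instance : DecidableRel coreGraph.Adj := fun u v => by
  unfold coreGraph
  infer_instance

/-- The bags of a path decomposition of `coreGraph` of width two. -/
def coreBag : Fin 6 → Finset (Fin 8) :=
  ![{0, 2}, {2, 3, 4}, {1, 3, 4}, {3, 4, 5}, {5, 6}, {6, 7}]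

theorem isPathDecomposition_coreBag :
    IsPathDecomposition coreGraph fun t => (coreBag t : Set (Fin 8)) where
  ordConnected v := by
    simp only [ordConnected_iff, subset_def, mem_ofPred_eq, Finset.mem_coe, mem_Icc]
    decide +revert
  exists_mem_bag := by
    simp only [Finset.mem_coe]
    decide

theorem coreGraph_lift : ∀ i j : Fin 5, i ≠ j →
    ∃ u v, coreGraph.Adj u v ∧ u.val % 5 = i ∧ v.val % 5 = j := by
  decide

theorem coreGraph_window : ∀ u v, coreGraph.Adj u v → ∀ u' v', coreGraph.Adj u' v' →
    ([u, v, u', v'].map fun w => w.val % 5).Nodup →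
    ∃ r ≤ 3, ∀ w ∈ [u, v, u', v'], r ≤ w.val ∧ w.val ≤ r + 4 := by
  decide +kernel

theorem visible_coreGraph : Visible 8 5 coreGraph := by
  unfold Visible
  decide

theorem card_coreBag_le (t : Fin 6) : (coreBag t).card ≤ 3 := by
  decide +revert

/-- The positions in the ordering `τ` of the vertices of `coreGraph` when `d` isolated vertices are
inserted between `v₅` and `v₆`. -/
def coreEmbedding (d : ℕ) : Fin 8 ↪ Fin (8 + d) where
  toFun a := ⟨if a.val < 5 then a else a + d, by grind⟩
  inj' a b := by grind

theorem coreEmbedding_val (d : ℕ) (a : Fin 8) :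
    (coreEmbedding d a).val = if a.val < 5 then a.val else a + d :=
  rfl

theorem natCast_coreEmbedding (d : ℕ) (a : Fin 8) :
    (coreEmbedding d a : ZMod (5 + d)) = (a.val % 5 : ℕ) := by
  rw [coreEmbedding_val]
  split_ifs with ha
  · rw [Nat.mod_eq_of_lt ha]
  · rw [show a.val + d = a % 5 + (5 + d) by lia, Nat.cast_add, ZMod.natCast_self, add_zero]

theorem coreEmbedding_mem_window (d : ℕ) {r : ℕ} {a : Fin 8} (hra : r ≤ a) (har : a ≤ r + 4) :
    coreEmbedding d a ∈ window (8 + d) (5 + d) (5 + d + r) := by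
  simp only [window, mem_ofPred_eq, coreEmbedding_val]
  grind

/-- The graph of the story for `ω = 5 + d`. -/
def paddedGraph (d : ℕ) : SimpleGraph (Fin (8 + d)) :=
  coreGraph.map (coreEmbedding d)

theorem visible_paddedGraph (d : ℕ) : Visible (8 + d) (5 + d) (paddedGraph d) := by
  rintro _ _ ⟨-, u, v, huv, rfl, rfl⟩
  have := visible_coreGraph u v huv
  simp only [coreEmbedding_val]
  grind

theorem seriesParallel_paddedGraph (d : ℕ) : SeriesParallel (paddedGraph d) := by
  refine (isPathDecomposition_coreBag.map (coreEmbedding d)).seriesParallel fun t => ?_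
  rw [(coreEmbedding d).injective.encard_image, encard_coe_eq_coe_finsetCard]
  exact_mod_cast card_coreBag_le t

theorem not_realizable_paddedGraph (d : ℕ) : ¬ Realizable (8 + d) (5 + d) 0 (paddedGraph d) := by
  have hinj : Function.Injective fun i : Fin 5 => (i.val : ZMod (5 + d)) := fun i j hij =>
    Fin.ext (((ZMod.natCast_eq_natCast_iff ..).1 hij).eq_of_lt_of_lt (by lia) (by lia))
  refine not_realizable_of_lifts_completeGraph (visible_paddedGraph d) hinj (fun i j hij => ?_) ?_
  · obtain ⟨u, v, huv, hu, hv⟩ := coreGraph_lift i j hij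
    exact ⟨coreEmbedding d u, coreEmbedding d v, SimpleGraph.map_adj_apply.2 huv,
      by rw [natCast_coreEmbedding, hu], by rw [natCast_coreEmbedding, hv]⟩
  · rintro _ _ _ _ ⟨-, u, v, huv, rfl, rfl⟩ ⟨-, u', v', huv', rfl, rfl⟩ hresidues
    simp only [List.map_cons, List.map_nil, natCast_coreEmbedding] at hresidues
    obtain ⟨r, hr, hmem⟩ := coreGraph_window u v huv u' v' huv'
      (List.Nodup.of_map (Nat.cast : ℕ → ZMod (5 + d)) hresidues)
    refine ⟨5 + d + r, by lia, ?_⟩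
    rintro _ (rfl | rfl | rfl | rfl) <;>
      exact coreEmbedding_mem_window d (hmem _ (by simp)).1 (hmem _ (by simp)).2

end Construction

/-- **Lemma 4.** For every `ω ≥ 5` there exists a minimal graph
story `S = (G, ω, τ)` such that `G` is a series-parallel graph and `S` is not
realizable. -/
theorem exists_unrealizable_series_parallel_minimal_story
    (ω : ℕ) (hω : 5 ≤ ω) :
    ∃ (n : ℕ) (G : SimpleGraph (Fin n)),
      ω ≤ n ∧ Visible n ω G ∧ SeriesParallel G ∧ ¬ Realizable n ω 0 G := by
  obtain ⟨d, rfl⟩ := Nat.exists_eq_add_of_le hω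
  exact ⟨8 + d, paddedGraph d, by lia, visible_paddedGraph d, seriesParallel_paddedGraph d,
    not_realizable_paddedGraph d⟩

end GraphStories
end
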